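/- (Footnote 7 / Lemma 16(i) with Equation (72).) For s > 0, let 𝒩_{A}^{1&2}(s) be the number of conjugacy classes of PSL₂(ℤ) consisting of primitive hyperbolic elements γ with translation length ℓ(γ) = 2·arcosh(|tr γ|/2) ≤ s that contain both an element ambiguous of the first kind and an element ambiguous of the second kind. Then, as s → +∞, 𝒩_{A}^{1&2}(s) = (3/(8π²)) s² e^{s/2} + O(s e^{s/2}). -/

import Mathlib

open Matrix
open scoped MatrixGroups

instance : Fact (Even (Fintype.card (Fin 2))) := ⟨⟨1, rfl⟩⟩

/-- The determinant `-1` integer matrix `W = [[1, 0], [0, -1]]`. -/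
noncomputable def Wmat : Matrix (Fin 2) (Fin 2) ℤ := !![1, 0; 0, -1]

/-- The determinant `-1` integer matrix `W₁ = [[1, 0], [1, -1]]`. -/
noncomputable def W1mat : Matrix (Fin 2) (Fin 2) ℤ := !![1, 0; 1, -1]

/-- A lift `A ∈ SL₂(ℤ)` is ambiguous of the first kind if `W·A·W⁻¹ = ±A⁻¹`. -/
def Amb1 (A : SL(2, ℤ)) : Prop :=
  Wmat * (A : Matrix (Fin 2) (Fin 2) ℤ) * Wmat⁻¹ = ((A⁻¹ : SL(2, ℤ)) : Matrix (Fin 2) (Fin 2) ℤ) ∨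
  Wmat * (A : Matrix (Fin 2) (Fin 2) ℤ) * Wmat⁻¹ = -((A⁻¹ : SL(2, ℤ)) : Matrix (Fin 2) (Fin 2) ℤ)

/-- A lift `A ∈ SL₂(ℤ)` is ambiguous of the second kind if `W₁·A·W₁⁻¹ = ±A⁻¹`. -/
def Amb2 (A : SL(2, ℤ)) : Prop :=
  W1mat * (A : Matrix (Fin 2) (Fin 2) ℤ) * W1mat⁻¹ = ((A⁻¹ : SL(2, ℤ)) : Matrix (Fin 2) (Fin 2) ℤ) ∨
  W1mat * (A : Matrix (Fin 2) (Fin 2) ℤ) * W1mat⁻¹ = -((A⁻¹ : SL(2, ℤ)) : Matrix (Fin 2) (Fin 2) ℤ)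

/-- The subgroup `{±1}` of `SL₂(ℤ)`. -/
def pmOne : Subgroup SL(2, ℤ) := Subgroup.zpowers (-1)

instance : pmOne.Normal := by
  constructor
  intro x hx g
  obtain ⟨n, rfl⟩ := Subgroup.mem_zpowers_iff.mp hx
  have hc : Commute g (-1 : SL(2, ℤ)) := by
    show g * (-1) = (-1) * g
    apply Subtype.ext
    show ((g * (-1) : SL(2, ℤ)) : Matrix (Fin 2) (Fin 2) ℤ)
        = (((-1) * g : SL(2, ℤ)) : Matrix (Fin 2) (Fin 2) ℤ)
    simp
  have hcn : Commute g ((-1 : SL(2, ℤ)) ^ n) := hc.zpow_right n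
  have : g * (-1 : SL(2, ℤ)) ^ n * g⁻¹ = (-1) ^ n := by
    rw [hcn.eq, mul_assoc, mul_inv_cancel, mul_one]
  rw [this]
  exact Subgroup.zpow_mem _ (Subgroup.mem_zpowers _) n

/-- `PSL₂(ℤ) = SL₂(ℤ)/{±1}`. -/
abbrev PSL2Z := SL(2, ℤ) ⧸ pmOne

/-- An element of `PSL₂(ℤ)` is hyperbolic if the absolute value of the trace of a lift
to `SL₂(ℤ)` is greater than `2`. -/
def IsHyp (γ : PSL2Z) : Prop :=
  ∃ A : SL(2, ℤ), (QuotientGroup.mk A : PSL2Z) = γ ∧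
    2 < |Matrix.trace (A : Matrix (Fin 2) (Fin 2) ℤ)|

/-- An element of `PSL₂(ℤ)` is primitive if it is not a proper power. -/
def IsPrim (γ : PSL2Z) : Prop := ¬ ∃ (δ : PSL2Z) (n : ℕ), 2 ≤ n ∧ δ ^ n = γ

/-- An element of `PSL₂(ℤ)` is ambiguous of the first kind if it has a lift which is. -/
def AmbFst (γ : PSL2Z) : Prop :=
  ∃ A : SL(2, ℤ), (QuotientGroup.mk A : PSL2Z) = γ ∧ Amb1 A

/-- An element of `PSL₂(ℤ)` is ambiguous of the second kind if it has a lift which is. -/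
def AmbSnd (γ : PSL2Z) : Prop :=
  ∃ A : SL(2, ℤ), (QuotientGroup.mk A : PSL2Z) = γ ∧ Amb2 A

/-- The inverse hyperbolic cosine. -/
noncomputable def arcosh (x : ℝ) : ℝ := Real.log (x + Real.sqrt (x ^ 2 - 1))

/-- The translation length `ℓ(γ) = 2 arcosh(|tr γ|/2)` of `γ ∈ PSL₂(ℤ)` is at most `s`. -/
def TransLenLE (γ : PSL2Z) (s : ℝ) : Prop :=
  ∃ A : SL(2, ℤ), (QuotientGroup.mk A : PSL2Z) = γ ∧
    2 * arcosh (((|Matrix.trace (A : Matrix (Fin 2) (Fin 2) ℤ)| : ℤ) : ℝ) / 2) ≤ s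

/-- The number of conjugacy classes of primitive hyperbolic elements of `PSL₂(ℤ)` with
translation length at most `s` containing both an element ambiguous of the first kind
and an element ambiguous of the second kind. -/
noncomputable def NAmbBoth (s : ℝ) : ℕ :=
  {C : ConjClasses PSL2Z | ∃ γ : PSL2Z, ConjClasses.mk γ = C ∧
      IsPrim γ ∧ IsHyp γ ∧ TransLenLE γ s ∧
      (∃ δ : PSL2Z, IsConj γ δ ∧ AmbFst δ) ∧
      (∃ δ : PSL2Z, IsConj γ δ ∧ AmbSnd δ)}.ncard



theorem W_inv : Wmat⁻¹ = Wmat := by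
  apply Matrix.inv_eq_right_inv
  ext i j; fin_cases i <;> fin_cases j <;> simp [Wmat, Matrix.mul_apply, Fin.sum_univ_two]

theorem W1_inv : W1mat⁻¹ = W1mat := by
  apply Matrix.inv_eq_right_inv
  ext i j; fin_cases i <;> fin_cases j <;> simp [W1mat, Matrix.mul_apply, Fin.sum_univ_two]

theorem sl_det (A : SL(2, ℤ)) : A 0 0 * A 1 1 - A 0 1 * A 1 0 = 1 := by
  have := A.det_coe
  rwa [Matrix.det_fin_two] at this

theorem sl_ext (A B : SL(2, ℤ)) (h00 : A 0 0 = B 0 0) (h01 : A 0 1 = B 0 1)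
    (h10 : A 1 0 = B 1 0) (h11 : A 1 1 = B 1 1) : A = B := by
  ext i j; fin_cases i <;> fin_cases j <;> assumption

theorem amb1_iff (A : SL(2, ℤ)) : Amb1 A ↔ A 0 0 = A 1 1 := by
  have hd := sl_det A
  unfold Amb1
  rw [W_inv, Matrix.SpecialLinearGroup.coe_inv, Matrix.adjugate_fin_two]
  simp only [← Matrix.ext_iff, Fin.forall_fin_two, Wmat, Matrix.mul_apply, Fin.sum_univ_two,
    Matrix.of_apply, Matrix.cons_val_zero, Matrix.cons_val_one, Matrix.neg_apply, Matrix.cons_val', Matrix.cons_val_fin_one]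
  constructor
  · rintro (⟨⟨h1, h2⟩, h3, h4⟩ | ⟨⟨h1, h2⟩, h3, h4⟩)
    · linarith
    · exfalso
      have e2 : A 0 1 = 0 := by linarith
      have e1 : A 0 0 = - A 1 1 := by linarith
      rw [e2, e1] at hd
      nlinarith [sq_nonneg (A 1 1)]
  · intro h
    left
    refine ⟨⟨?_, ?_⟩, ?_, ?_⟩ <;> linarith

theorem amb2_iff (A : SL(2, ℤ)) : Amb2 A ↔ A 1 1 = A 0 0 + A 0 1 := by
  have hd := sl_det A
  unfold Amb2
  rw [W1_inv, Matrix.SpecialLinearGroup.coe_inv, Matrix.adjugate_fin_two]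
  simp only [← Matrix.ext_iff, Fin.forall_fin_two, W1mat, Matrix.mul_apply, Fin.sum_univ_two,
    Matrix.of_apply, Matrix.cons_val_zero, Matrix.cons_val_one, Matrix.neg_apply, Matrix.cons_val', Matrix.cons_val_fin_one]
  constructor
  · rintro (⟨⟨h1, h2⟩, h3, h4⟩ | ⟨⟨h1, h2⟩, h3, h4⟩)
    · linarith
    · exfalso
      have e2 : A 0 1 = 0 := by linarith
      have e1 : A 0 0 = - A 1 1 := by linarith
      rw [e2, e1] at hd
      nlinarith [sq_nonneg (A 1 1)]
  · intro h
    left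
    refine ⟨⟨?_, ?_⟩, ?_, ?_⟩ <;> linarith

theorem mem_pmOne (A : SL(2, ℤ)) : A ∈ pmOne ↔ A = 1 ∨ A = -1 := by
  unfold pmOne
  rw [Subgroup.mem_zpowers_iff]
  constructor
  · rintro ⟨k, rfl⟩
    rcases Int.even_or_odd k with h | h
    · left; exact h.neg_one_zpow
    · right; exact h.neg_one_zpow
  · rintro (h | h)
    · exact ⟨0, by simp [h]⟩
    · exact ⟨1, by simp [h]⟩

theorem psl_mk_eq (A B : SL(2, ℤ)) :
    (QuotientGroup.mk A : PSL2Z) = QuotientGroup.mk B ↔ A = B ∨ A = -B := by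
  rw [QuotientGroup.eq, mem_pmOne]
  constructor
  · rintro (h | h)
    · left; exact (inv_mul_eq_one.mp h)
    · right
      have : B = A * (-1) := by rw [← h]; simp
      rw [this]; simp
  · rintro (h | h)
    · left; simp [h]
    · right; subst h
      rw [inv_mul_eq_iff_eq_mul]; simp

theorem psl_mk_neg (A : SL(2, ℤ)) : (QuotientGroup.mk (-A) : PSL2Z) = QuotientGroup.mk A :=
  (psl_mk_eq _ _).2 (Or.inr rfl)

theorem psl_conj_iff (A B : SL(2, ℤ)) :
    IsConj (QuotientGroup.mk A : PSL2Z) (QuotientGroup.mk B) ↔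
      ∃ g : SL(2, ℤ), g * A = B * g ∨ g * A = -B * g := by
  rw [isConj_iff]
  constructor
  · rintro ⟨c, hc⟩
    obtain ⟨g, rfl⟩ := QuotientGroup.mk_surjective c
    refine ⟨g, ?_⟩
    have : (QuotientGroup.mk (g * A * g⁻¹) : PSL2Z) = QuotientGroup.mk B := hc
    rcases (psl_mk_eq _ _).1 this with h | h
    · left; rw [← h]; group
    · right; rw [← h]; group
  · rintro ⟨g, h⟩
    refine ⟨QuotientGroup.mk g, ?_⟩
    show (QuotientGroup.mk (g * A * g⁻¹) : PSL2Z) = QuotientGroup.mk B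
    rw [psl_mk_eq]
    rcases h with h | h
    · left; rw [h]; group
    · right; rw [h]; group

theorem isPrim_conj {γ δ : PSL2Z} (h : IsConj γ δ) (hp : IsPrim γ) : IsPrim δ := by
  rintro ⟨η, n, hn, rfl⟩
  obtain ⟨c, hc⟩ := isConj_iff.1 h.symm
  exact hp ⟨c * η * c⁻¹, n, hn, by rw [← hc, conj_pow]⟩

/-- absolute trace invariance -/
theorem abs_trace_eq {A B : SL(2, ℤ)}
    (h : IsConj (QuotientGroup.mk A : PSL2Z) (QuotientGroup.mk B)) :
    |Matrix.trace (A : Matrix (Fin 2) (Fin 2) ℤ)| = |Matrix.trace (B : Matrix (Fin 2) (Fin 2) ℤ)| := by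
  obtain ⟨g, hg⟩ := (psl_conj_iff A B).1 h
  have key : ∀ C : SL(2, ℤ), g * A = C * g →
      Matrix.trace (A : Matrix (Fin 2) (Fin 2) ℤ) = Matrix.trace (C : Matrix (Fin 2) (Fin 2) ℤ) := by
    intro C hC
    have : A = g⁻¹ * (C * g) := by rw [← hC]; group
    rw [this, Matrix.SpecialLinearGroup.coe_mul, Matrix.trace_mul_comm,
      ← Matrix.SpecialLinearGroup.coe_mul, mul_assoc, mul_inv_cancel, mul_one]
  rcases hg with hg | hg
  · rw [key _ hg]
  · rw [key _ hg, Matrix.SpecialLinearGroup.coe_neg, Matrix.trace_neg, abs_neg]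

theorem isHyp_mk (A : SL(2, ℤ)) : IsHyp (QuotientGroup.mk A) ↔
    2 < |Matrix.trace (A : Matrix (Fin 2) (Fin 2) ℤ)| := by
  constructor
  · rintro ⟨B, hB, h⟩
    rwa [abs_trace_eq (A := B) (B := A) (by rw [hB])] at h
  · intro h; exact ⟨A, rfl, h⟩

theorem transLen_mk (A : SL(2, ℤ)) (s : ℝ) : TransLenLE (QuotientGroup.mk A) s ↔
    2 * arcosh (((|Matrix.trace (A : Matrix (Fin 2) (Fin 2) ℤ)| : ℤ) : ℝ) / 2) ≤ s := by
  constructor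
  · rintro ⟨B, hB, h⟩
    rwa [abs_trace_eq (A := B) (B := A) (by rw [hB])] at h
  · intro h; exact ⟨A, rfl, h⟩

/-- the matrix `[[a,b],[c,a]]` -/
def abMat (a b c : ℤ) (h : a * a - b * c = 1) : SL(2, ℤ) :=
  ⟨!![a, b; c, a], by rw [Matrix.det_fin_two]; simpa using h⟩

@[simp] theorem abMat_00 (a b c : ℤ) (h) : (abMat a b c h) 0 0 = a := rfl
@[simp] theorem abMat_01 (a b c : ℤ) (h) : (abMat a b c h) 0 1 = b := rfl
@[simp] theorem abMat_10 (a b c : ℤ) (h) : (abMat a b c h) 1 0 = c := rfl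
@[simp] theorem abMat_11 (a b c : ℤ) (h) : (abMat a b c h) 1 1 = a := rfl

theorem sl_mul_apply (A B : SL(2, ℤ)) (i j : Fin 2) :
    (A * B) i j = A i 0 * B 0 j + A i 1 * B 1 j := by
  rw [Matrix.SpecialLinearGroup.coe_mul, Matrix.mul_apply, Fin.sum_univ_two]

/-- Pell solutions embed. -/
def pellHom (β κ : ℤ) : Pell.Solution₁ (β * κ) →* SL(2, ℤ) where
  toFun z := abMat z.x (z.y * β) (z.y * κ) (by have := z.prop; linear_combination this)
  map_one' := by
    apply sl_ext <;> simp
  map_mul' z w := by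
    apply sl_ext <;> simp only [sl_mul_apply, abMat_00, abMat_01, abMat_10, abMat_11,
      Pell.Solution₁.x_mul, Pell.Solution₁.y_mul] <;> ring

theorem pellHom_neg (β κ : ℤ) (z) : pellHom β κ (-z) = - pellHom β κ z := by
  apply sl_ext <;> simp [pellHom] 

theorem centralizer_psl (a b c : ℤ) (h : a * a - b * c = 1) (ha : 2 ≤ a) (hb : 0 < b) (hc : 0 < c)
    (hp : IsPrim (QuotientGroup.mk (abMat a b c h))) (g : SL(2, ℤ))
    (hg : g * abMat a b c h = abMat a b c h * g) :
    ∃ k : ℤ, (QuotientGroup.mk g : PSL2Z) = (QuotientGroup.mk (abMat a b c h)) ^ k := by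
  obtain ⟨e, β, κ, he, hcop, rfl, rfl⟩ : ∃ e β κ : ℤ, 0 < e ∧ IsCoprime β κ ∧ b = e * β ∧ c = e * κ := by
    have hgpos : 0 < Int.gcd b c := Int.gcd_pos_of_ne_zero_left _ hb.ne'
    obtain ⟨β, κ, h1, h2, h3⟩ := Int.exists_gcd_one hgpos
    exact ⟨Int.gcd b c, β, κ, by exact_mod_cast hgpos, Int.isCoprime_iff_gcd_eq_one.2 h1, by rw [mul_comm]; exact h2,
      by rw [mul_comm]; exact h3⟩
  have hβ : 0 < β := by nlinarith
  have hκ : 0 < κ := by nlinarith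
  have hap : a ^ 2 - β * κ * e ^ 2 = 1 := by linear_combination h
  set s0 : Pell.Solution₁ (β * κ) := Pell.Solution₁.mk a e hap with hs0
  have hx : 1 < s0.x := by rw [hs0, Pell.Solution₁.x_mk]; omega
  obtain ⟨F, hF⟩ := Pell.IsFundamental.exists_of_not_isSquare
    (Pell.Solution₁.d_pos_of_one_lt_x hx) (Pell.Solution₁.d_nonsquare_of_one_lt_x hx)
  have hA : abMat a (e * β) (e * κ) h = pellHom β κ s0 := rfl
  have hzp : ∀ z : Pell.Solution₁ (β * κ), ∃ n : ℤ,
      (QuotientGroup.mk (pellHom β κ z) : PSL2Z) = (QuotientGroup.mk (pellHom β κ F)) ^ n := by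
    intro z
    obtain ⟨n, hn | hn⟩ := hF.eq_zpow_or_neg_zpow z
    · refine ⟨n, ?_⟩
      rw [hn, map_zpow]; rfl
    · refine ⟨n, ?_⟩
      rw [hn, pellHom_neg, psl_mk_neg, map_zpow]; rfl
  -- g comes from a Pell solution
  have e00 := congrArg (fun M : SL(2, ℤ) => M 0 0) hg
  have e01 := congrArg (fun M : SL(2, ℤ) => M 0 1) hg
  simp only [sl_mul_apply, abMat_00, abMat_01, abMat_10, abMat_11] at e00 e01
  have hpt : g 0 0 = g 1 1 := by
    have : (e * β) * (g 0 0 - g 1 1) = 0 := by linear_combination e01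
    rcases mul_eq_zero.1 this with h' | h'
    · exact absurd h' (by positivity)
    · linarith
  have hqr : g 0 1 * κ = β * g 1 0 := by
    have : e * (g 0 1 * κ - β * g 1 0) = 0 := by linear_combination e00
    rcases mul_eq_zero.1 this with h' | h'
    · exact absurd h' he.ne'
    · linarith
  have hdvd : β ∣ g 0 1 := hcop.dvd_of_dvd_mul_right ⟨_, hqr⟩
  obtain ⟨y, hy⟩ := hdvd
  have hr : g 1 0 = y * κ := by
    have : β * (g 1 0 - y * κ) = 0 := by rw [hy] at hqr; linear_combination -hqr
    rcases mul_eq_zero.1 this with h' | h'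
    · exact absurd h' hβ.ne'
    · linarith
  have hdet := sl_det g
  have hgp : g 0 0 ^ 2 - β * κ * y ^ 2 = 1 := by
    rw [← hpt, hy, hr] at hdet; linear_combination hdet
  have hgz : g = pellHom β κ (Pell.Solution₁.mk (g 0 0) y hgp) := by
    apply sl_ext
    · rfl
    · rw [hy, mul_comm]; rfl
    · rw [hr]; rfl
    · rw [← hpt]; rfl
  obtain ⟨n, hn⟩ := hzp s0
  obtain ⟨k, hk⟩ := hzp (Pell.Solution₁.mk (g 0 0) y hgp)
  rw [← hgz] at hk
  rw [← hA] at hn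
  have hcase : n = 1 ∨ n = -1 := by
    by_contra hne
    have hn0 : n ≠ 0 := by
      rintro rfl
      rw [zpow_zero] at hn
      have := (psl_mk_eq _ 1).1 hn
      rcases this with h' | h'
      · have := congrArg (fun M : SL(2, ℤ) => M 0 1) h'
        simp at this; omega
      · have := congrArg (fun M : SL(2, ℤ) => M 0 1) h'
        simp at this; omega
    rcases lt_or_gt_of_ne hn0 with hneg | hpos
    · apply hp
      refine ⟨(QuotientGroup.mk (pellHom β κ F))⁻¹, n.natAbs, by omega, ?_⟩
      rw [hn, ← zpow_natCast, _root_.inv_zpow', Int.natCast_natAbs, abs_of_neg hneg, neg_neg]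
    · apply hp
      refine ⟨(QuotientGroup.mk (pellHom β κ F)), n.natAbs, by omega, ?_⟩
      rw [hn, ← zpow_natCast, Int.natCast_natAbs, abs_of_pos hpos]
  rcases hcase with rfl | rfl
  · exact ⟨k, by rw [hk, hn, zpow_one]⟩
  · exact ⟨-k, by rw [hk, hn, ← _root_.zpow_mul]; simp⟩


theorem sl_eq_zpow_of_mk {g A : SL(2, ℤ)} {k : ℤ}
    (h : (QuotientGroup.mk g : PSL2Z) = (QuotientGroup.mk A) ^ k) : g = A ^ k ∨ g = -(A ^ k) := by
  rw [← psl_mk_eq, h]; rfl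

/-- If `V` inverts `B`, `W` inverts `A` and `g A = B g`, then `(V g W)⁻¹ g` commutes with `A`. -/
theorem comm_of_invert (V : Matrix (Fin 2) (Fin 2) ℤ) (A B g k : SL(2, ℤ)) (hg : g * A = B * g)
    (hV : V * (B : Matrix (Fin 2) (Fin 2) ℤ) = ((B⁻¹ : SL(2, ℤ)) : Matrix (Fin 2) (Fin 2) ℤ) * V)
    (hW : Wmat * ((A⁻¹ : SL(2, ℤ)) : Matrix (Fin 2) (Fin 2) ℤ) = (A : Matrix (Fin 2) (Fin 2) ℤ) * Wmat)
    (hk : (k : Matrix (Fin 2) (Fin 2) ℤ) = V * (g : Matrix (Fin 2) (Fin 2) ℤ) * Wmat) :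
    (k⁻¹ * g) * A = A * (k⁻¹ * g) := by
  have h1 : k * A⁻¹ = B⁻¹ * k := by
    apply Subtype.ext
    rw [Matrix.SpecialLinearGroup.coe_mul, Matrix.SpecialLinearGroup.coe_mul, hk,
      Matrix.mul_assoc, hW, Matrix.mul_assoc V, ← Matrix.mul_assoc _ _ Wmat,
      ← Matrix.SpecialLinearGroup.coe_mul, hg, Matrix.SpecialLinearGroup.coe_mul,
      ← Matrix.mul_assoc, ← Matrix.mul_assoc, hV]
    simp only [Matrix.mul_assoc]
  have h2 : k * A = B * k := by
    have : k * A = B * (B⁻¹ * k) * A := by group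
    rw [this, ← h1]; group
  have h3 : A * k⁻¹ = k⁻¹ * B := by
    have : A * k⁻¹ = k⁻¹ * (k * A) * k⁻¹ := by group
    rw [this, h2]; group
  rw [← mul_assoc, h3, mul_assoc, hg, mul_assoc]

theorem W_inverts (A : SL(2, ℤ)) (h : A 0 0 = A 1 1) :
    Wmat * ((A⁻¹ : SL(2, ℤ)) : Matrix (Fin 2) (Fin 2) ℤ) = (A : Matrix (Fin 2) (Fin 2) ℤ) * Wmat := by
  rw [Matrix.SpecialLinearGroup.coe_inv, Matrix.adjugate_fin_two]
  ext i j; fin_cases i <;> fin_cases j <;>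
    simp [Wmat, Matrix.mul_apply, Fin.sum_univ_two, h]

theorem W_inverts' (A : SL(2, ℤ)) (h : A 0 0 = A 1 1) :
    Wmat * (A : Matrix (Fin 2) (Fin 2) ℤ) = ((A⁻¹ : SL(2, ℤ)) : Matrix (Fin 2) (Fin 2) ℤ) * Wmat := by
  rw [Matrix.SpecialLinearGroup.coe_inv, Matrix.adjugate_fin_two]
  ext i j; fin_cases i <;> fin_cases j <;>
    simp [Wmat, Matrix.mul_apply, Fin.sum_univ_two, h]

theorem W1_inverts' (A : SL(2, ℤ)) (h : A 1 1 = A 0 0 + A 0 1) :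
    W1mat * (A : Matrix (Fin 2) (Fin 2) ℤ) = ((A⁻¹ : SL(2, ℤ)) : Matrix (Fin 2) (Fin 2) ℤ) * W1mat := by
  rw [Matrix.SpecialLinearGroup.coe_inv, Matrix.adjugate_fin_two]
  ext i j; fin_cases i <;> fin_cases j <;>
    simp [W1mat, Matrix.mul_apply, Fin.sum_univ_two, h] <;> ring

/-- conjugation by `W` -/
def sigW (g : SL(2, ℤ)) : SL(2, ℤ) :=
  ⟨!![g 0 0, -g 0 1; -g 1 0, g 1 1], by
    rw [Matrix.det_fin_two]; have := sl_det g; simp; linarith⟩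

theorem sigW_coe (g : SL(2, ℤ)) :
    (sigW g : Matrix (Fin 2) (Fin 2) ℤ) = Wmat * (g : Matrix (Fin 2) (Fin 2) ℤ) * Wmat := by
  ext i j; fin_cases i <;> fin_cases j <;>
    simp [sigW, Wmat, Matrix.mul_apply, Matrix.vecMul, dotProduct, Fin.sum_univ_two]

theorem sigW_mul (g h : SL(2, ℤ)) : sigW (g * h) = sigW g * sigW h := by
  apply sl_ext <;> simp only [sl_mul_apply] <;> simp [sigW, Matrix.mul_apply, Fin.sum_univ_two] <;> ring

theorem sigW_ab (A : SL(2, ℤ)) (h : A 0 0 = A 1 1) : sigW A = A⁻¹ := by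
  apply Subtype.ext
  rw [Matrix.SpecialLinearGroup.coe_inv, Matrix.adjugate_fin_two]
  ext i j; fin_cases i <;> fin_cases j <;> simp [sigW, h]

theorem sigW_hom (A : SL(2, ℤ)) (h : A 0 0 = A 1 1) (k : ℤ) : sigW (A ^ k) = A ^ (-k) := by
  let f : SL(2, ℤ) →* SL(2, ℤ) := MonoidHom.mk' sigW sigW_mul
  have : f (A ^ k) = (f A) ^ k := map_zpow f A k
  have h2 : f A = A⁻¹ := sigW_ab A h
  rw [h2] at this
  calc sigW (A ^ k) = f (A ^ k) := rfl
    _ = A⁻¹ ^ k := this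
    _ = A ^ (-k) := by rw [_root_.inv_zpow']

theorem ab_inj (a b c a' b' c' : ℤ) (h : a * a - b * c = 1) (h' : a' * a' - b' * c' = 1)
    (ha : 2 ≤ a) (hb : 0 < b) (hc : 0 < c) (ha' : 2 ≤ a') (hb' : 0 < b') (hc' : 0 < c')
    (hpar : ¬ (2 ∣ b ∧ 2 ∣ c))
    (hp : IsPrim (QuotientGroup.mk (abMat a b c h)))
    (hconj : IsConj (QuotientGroup.mk (abMat a b c h) : PSL2Z) (QuotientGroup.mk (abMat a' b' c' h'))) :
    a = a' ∧ b = b' ∧ c = c' := by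
  obtain ⟨g, hg⟩ := (psl_conj_iff _ _).1 hconj
  set A := abMat a b c h with hA
  set B := abMat a' b' c' h' with hB
  have htr : ∀ C : SL(2, ℤ), g * A = C * g → A 0 0 + A 1 1 = C 0 0 + C 1 1 := by
    intro C hC
    have : A = g⁻¹ * (C * g) := by rw [← hC]; group
    have h1 : Matrix.trace (A : Matrix (Fin 2) (Fin 2) ℤ) = Matrix.trace (C : Matrix (Fin 2) (Fin 2) ℤ) := by
      rw [this, Matrix.SpecialLinearGroup.coe_mul, Matrix.trace_mul_comm,
        ← Matrix.SpecialLinearGroup.coe_mul, mul_assoc, mul_inv_cancel, mul_one]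
    simpa [Matrix.trace_fin_two] using h1
  replace hg : g * A = B * g := by
    rcases hg with hg | hg
    · exact hg
    · have := htr _ hg
      simp [hA, hB] at this
      omega
  have haa : a = a' := by
    have := htr _ hg
    simp [hA, hB] at this
    omega
  have hcomm := comm_of_invert Wmat A B g (sigW g) hg (W_inverts' B rfl) (W_inverts A rfl) (sigW_coe g)
  obtain ⟨n, hn⟩ := centralizer_psl a b c h ha hb hc hp _ hcomm
  have hn' := sl_eq_zpow_of_mk hn
  -- replace g
  obtain ⟨k, ε, hε, hnk⟩ : ∃ k ε : ℤ, (ε = 0 ∨ ε = 1) ∧ n = 2 * k + ε :=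
    ⟨n / 2, n % 2, by omega, by omega⟩
  set g' := g * A ^ (-k) with hg'
  have hg'A : g' * A = B * g' := by
    rw [hg', mul_assoc, ← mul_assoc B, ← hg, mul_assoc]
    congr 1
    rw [← _root_.zpow_add_one, ← _root_.zpow_one_add, add_comm]
  have hh : (sigW g')⁻¹ * g' = A ^ ε ∨ (sigW g')⁻¹ * g' = -(A ^ ε) := by
    have e1 : (sigW g')⁻¹ * g' = A ^ (-k) * ((sigW g)⁻¹ * g) * A ^ (-k) := by
      rw [hg', sigW_mul, sigW_hom A rfl, neg_neg, _root_.mul_inv_rev, _root_.zpow_neg]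
      simp only [mul_assoc]
    rw [e1]
    rcases hn' with h1 | h1
    · left
      rw [h1, ← _root_.zpow_add, ← _root_.zpow_add, hnk]; congr 1; ring
    · right
      rw [h1, mul_neg, neg_mul, ← _root_.zpow_add, ← _root_.zpow_add, hnk]; congr 2; ring
  have hdet := sl_det g'
  have m01 : ((sigW g')⁻¹ * g') 0 1 = 2 * (g' 1 1 * g' 0 1) := by
    rw [sl_mul_apply, Matrix.SpecialLinearGroup.coe_inv, Matrix.adjugate_fin_two]
    simp [sigW]; ring
  have m10 : ((sigW g')⁻¹ * g') 1 0 = 2 * (g' 0 0 * g' 1 0) := by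
    rw [sl_mul_apply, Matrix.SpecialLinearGroup.coe_inv, Matrix.adjugate_fin_two]
    simp [sigW]; ring
  rcases hε with rfl | rfl
  · have z01 : g' 1 1 * g' 0 1 = 0 := by
      rcases hh with h1 | h1 <;> rw [h1] at m01 <;> simp at m01
      · simpa using m01
      · simpa using m01
    have z10 : g' 0 0 * g' 1 0 = 0 := by
      rcases hh with h1 | h1 <;> rw [h1] at m10 <;> simp at m10
      · simpa using m10
      · simpa using m10
    have e00 := congrArg (fun M : SL(2, ℤ) => M 0 0) hg'A
    have e01 := congrArg (fun M : SL(2, ℤ) => M 0 1) hg'A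
    have e10 := congrArg (fun M : SL(2, ℤ) => M 1 0) hg'A
    simp only [sl_mul_apply, hA, hB, abMat_00, abMat_01, abMat_10, abMat_11] at e00 e01 e10
    rcases mul_eq_zero.1 z01 with z | z
    · exfalso
      rcases mul_eq_zero.1 z10 with z' | z'
      · rw [z, z'] at hdet
        rw [z'] at e00
        have : g' 0 1 * c = b' * g' 1 0 := by rw [← haa] at e00; linarith
        have h3 : g' 0 1 * g' 0 1 * c = - b' := by
          have : g' 0 1 * (g' 0 1 * c) = b' * (g' 0 1 * g' 1 0) := by rw [this]; ring
          have h4 : g' 0 1 * g' 1 0 = -1 := by linarith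
          rw [h4] at this; linarith
        nlinarith [mul_self_nonneg (g' 0 1)]
      · rw [z, z'] at hdet; simp at hdet
    · rcases mul_eq_zero.1 z10 with z' | z'
      · rw [z, z'] at hdet; simp at hdet
      · rw [z, z'] at hdet
        simp at hdet
        have hpt : g' 0 0 = g' 1 1 ∧ g' 0 0 ≠ 0 := by
          rcases Int.mul_eq_one_iff_eq_one_or_neg_one.1 hdet with ⟨x, y⟩ | ⟨x, y⟩ <;>
            rw [x, y] <;> simp
        obtain ⟨hpt, h0⟩ := hpt
        rw [z, ← hpt] at e01
        rw [z', ← hpt] at e10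
        refine ⟨haa, ?_, ?_⟩
        · have : g' 0 0 * (b - b') = 0 := by linear_combination e01
          rcases mul_eq_zero.1 this with q | q
          · exact absurd q h0
          · linarith
        · have : g' 0 0 * (c - c') = 0 := by linear_combination e10
          rcases mul_eq_zero.1 this with q | q
          · exact absurd q h0
          · linarith
  · exfalso
    apply hpar
    rw [zpow_one] at hh
    rcases hh with h1 | h1
    · rw [h1] at m01 m10
      exact ⟨⟨_, m01⟩, ⟨_, m10⟩⟩
    · rw [h1] at m01 m10
      have m01' : -b = 2 * (g' 1 1 * g' 0 1) := m01
      have m10' : -c = 2 * (g' 0 0 * g' 1 0) := m10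
      exact ⟨(dvd_neg.1 ⟨_, m01'⟩), (dvd_neg.1 ⟨_, m10'⟩)⟩


/-- `W₁ g W` -/
def kapW (g : SL(2, ℤ)) : SL(2, ℤ) :=
  ⟨!![g 0 0, -g 0 1; g 0 0 - g 1 0, g 1 1 - g 0 1], by
    rw [Matrix.det_fin_two]; have := sl_det g; simp; linarith⟩

theorem kapW_coe (g : SL(2, ℤ)) :
    (kapW g : Matrix (Fin 2) (Fin 2) ℤ) = W1mat * (g : Matrix (Fin 2) (Fin 2) ℤ) * Wmat := by
  ext i j; fin_cases i <;> fin_cases j <;>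
    simp [kapW, Wmat, W1mat, Matrix.mul_apply, Matrix.vecMul, dotProduct, Fin.sum_univ_two] <;> ring

/-- congruence subgroup of level two -/
def Gam2 : Subgroup SL(2, ℤ) where
  carrier := {A | 2 ∣ A 0 1 ∧ 2 ∣ A 1 0}
  one_mem' := by simp
  mul_mem' := by
    rintro A B ⟨h1, h2⟩ ⟨h3, h4⟩
    constructor
    · rw [sl_mul_apply]; exact dvd_add (h3.mul_left _) (h1.mul_right _)
    · rw [sl_mul_apply]; exact dvd_add (h2.mul_right _) (h4.mul_left _)
  inv_mem' := by
    rintro A ⟨h1, h2⟩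
    constructor
    · rw [Matrix.SpecialLinearGroup.coe_inv, Matrix.adjugate_fin_two]
      simpa using h1
    · rw [Matrix.SpecialLinearGroup.coe_inv, Matrix.adjugate_fin_two]
      simpa using h2

theorem not_both_even (a b c : ℤ) (h : a * a - b * c = 1)
    (ha : 2 ≤ a) (hb : 0 < b) (hc : 0 < c)
    (hp : IsPrim (QuotientGroup.mk (abMat a b c h)))
    (hsnd : ∃ δ : PSL2Z, IsConj (QuotientGroup.mk (abMat a b c h) : PSL2Z) δ ∧ AmbSnd δ) :
    ¬ (2 ∣ b ∧ 2 ∣ c) := by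
  rintro ⟨h2b, h2c⟩
  obtain ⟨δ, hconj, B, rfl, hB⟩ := hsnd
  rw [amb2_iff] at hB
  obtain ⟨g, hg⟩ := (psl_conj_iff _ _).1 hconj
  set A := abMat a b c h with hA
  obtain ⟨B', hB', hg⟩ : ∃ B' : SL(2, ℤ), B' 1 1 = B' 0 0 + B' 0 1 ∧ g * A = B' * g := by
    rcases hg with hg | hg
    · exact ⟨B, hB, hg⟩
    · refine ⟨-B, ?_, hg⟩
      simp [hB]; ring
  have hcomm := comm_of_invert W1mat A B' g (kapW g) hg (W1_inverts' B' hB') (W_inverts A rfl)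
    (kapW_coe g)
  obtain ⟨n, hn⟩ := centralizer_psl a b c h ha hb hc hp _ hcomm
  have hn' := sl_eq_zpow_of_mk hn
  have hmem : A ^ n ∈ Gam2 := Gam2.zpow_mem ⟨h2b, h2c⟩ n
  have hmem2 : (kapW g)⁻¹ * g ∈ Gam2 := by
    rcases hn' with h1 | h1
    · rw [h1]; exact hmem
    · rw [h1]
      obtain ⟨x, y⟩ := hmem
      constructor
      · simpa using x
      · simpa using y
  obtain ⟨m1, m2⟩ := hmem2
  rw [sl_mul_apply, Matrix.SpecialLinearGroup.coe_inv, Matrix.adjugate_fin_two] at m1 m2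
  simp [kapW] at m1 m2
  have hdet := sl_det g
  -- m1 : 2 ∣ (t - q) q + q t ; m2 : 2 ∣ -(p-r) p + p r
  have q2 : (2:ℤ) ∣ g 0 1 := by
    have : (2:ℤ) ∣ g 0 1 * g 0 1 := by
      obtain ⟨z, hz⟩ := m1
      exact ⟨g 1 1 * g 0 1 - z, by linarith⟩
    rcases Int.prime_two.dvd_or_dvd this with h | h <;> exact h
  have p2 : (2:ℤ) ∣ g 0 0 := by
    have : (2:ℤ) ∣ g 0 0 * g 0 0 := by
      obtain ⟨z, hz⟩ := m2
      exact ⟨g 1 0 * g 0 0 - z, by linarith⟩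
    rcases Int.prime_two.dvd_or_dvd this with h | h <;> exact h
  have : (2:ℤ) ∣ 1 := by
    rw [← hdet]
    exact dvd_sub (p2.mul_right _) (q2.mul_right _)
  omega

theorem exists_snd (a b c : ℤ) (h : a * a - b * c = 1)
    (ha : 2 ≤ a) (hb : 0 < b) (hpar : ¬ (2 ∣ b ∧ 2 ∣ c)) :
    ∃ δ : PSL2Z, IsConj (QuotientGroup.mk (abMat a b c h) : PSL2Z) δ ∧ AmbSnd δ := by
  have hgpos : 0 < Int.gcd b (a + 1) := Int.gcd_pos_of_ne_zero_left _ hb.ne'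
  obtain ⟨β, α, hco, hβ, hα⟩ := Int.exists_gcd_one hgpos
  set e : ℤ := (Int.gcd b (a + 1) : ℤ) with he
  have he0 : e ≠ 0 := by rw [he]; exact_mod_cast hgpos.ne'
  -- v = (β, -α)
  obtain ⟨x0, y0, hxy⟩ := Int.isCoprime_iff_gcd_eq_one.2 hco
  -- x0 * β + y0 * α = 1 ; u = (x, y) with  -x α - y β = 1
  -- eigenvector equations
  have ev1 : a * β - b * α = -β := by
    have : e * (a * β - b * α + β) = 0 := by
      have : e * (a * β - b * α + β) = (a + 1) * (β * e) - b * (α * e) := by ring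
      rw [this, ← hβ, ← hα]; ring
    rcases mul_eq_zero.1 this with q | q
    · exact absurd q he0
    · linarith
  have ev2 : c * β - a * α = -α := by
    have : e * (c * β - a * α + α) = 0 := by
      have : e * (c * β - a * α + α) = c * (β * e) - (a - 1) * (α * e) := by ring
      rw [this, ← hβ, ← hα]; linear_combination -h
    rcases mul_eq_zero.1 this with q | q
    · exact absurd q he0
    · linarith
  -- u = (-y0, -x0)
  -- k
  obtain ⟨x, y, hdetu⟩ : ∃ x y : ℤ, - x * α - y * β = 1 := ⟨-y0, -x0, by linarith⟩
  -- M u = (a x + b y, -c x - a y) = u + k v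
  obtain ⟨k, hk⟩ : ∃ k : ℤ, k = -c * x * x - 2 * a * x * y - b * y * y := ⟨_, rfl⟩
  have mu1 : a * x + b * y = x + k * β := by
    rw [hk]
    linear_combination (-(x + a * x + b * y) + 2 * x) * hdetu + (x * y) * ev1 + x ^ 2 * ev2
  have mu2 : -c * x - a * y = y - k * α := by
    rw [hk]
    linear_combination (c * x + a * y + y) * hdetu + x * y * ev2 + y ^ 2 * ev1
  have hkodd : k % 2 = 1 := by
    by_contra hne
    obtain ⟨j, hj⟩ : ∃ j, k = 2 * j := ⟨k / 2, by omega⟩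
    apply hpar
    constructor
    · exact ⟨-β * (x + j * β), by rw [hj] at mu1; linear_combination (-b) * hdetu + x * ev1 - β * mu1⟩
    · exact ⟨α * y - j * α * α, by rw [hj] at mu2; linear_combination (-c) * hdetu - y * ev2 + α * mu2⟩
  obtain ⟨j, hj⟩ : ∃ j, k = 2 * j + 1 := ⟨k / 2, by omega⟩
  rw [hj] at mu1 mu2
  obtain ⟨x', hx'⟩ : ∃ x', x' = x + j * β := ⟨_, rfl⟩
  obtain ⟨y', hy'⟩ : ∃ y', y' = y - j * α := ⟨_, rfl⟩
  have nu1 : a * x' + b * y' = x' + β := by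
    rw [hx', hy']; linear_combination mu1 + j * ev1
  have nu2 : c * x' + a * y' = -y' + α := by
    rw [hx', hy']; linear_combination -mu2 + j * ev2
  have hdet' : -x' * α - y' * β = 1 := by
    rw [hx', hy']; linear_combination hdetu
  let P : SL(2, ℤ) := ⟨!![-α, -β; -y', x'], by
    rw [Matrix.det_fin_two]; simp; linarith⟩
  have hP : (P⁻¹ : SL(2, ℤ)).1 = !![x', β; y', -α] := by
    rw [Matrix.SpecialLinearGroup.coe_inv, Matrix.adjugate_fin_two]
    simp [P]
  refine ⟨QuotientGroup.mk (P * abMat a b c h * P⁻¹), ?_, _, rfl, ?_⟩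
  · rw [psl_conj_iff]
    exact ⟨P, Or.inl (by group)⟩
  · rw [amb2_iff]
    simp only [sl_mul_apply, abMat_00, abMat_01, abMat_10, abMat_11, hP]
    simp [P]
    linear_combination (-y') * ev1 + x' * ev2 + α * nu1 + β * nu2 + α * ev1 + β * ev2


theorem ab_pow (p q r : ℤ) (h : p * p - q * r = 1) (hp : 1 ≤ p) (hqr : 0 ≤ q * r) (n : ℕ) :
    ∃ x y : ℤ, (abMat p q r h ^ n) 0 0 = x ∧ (abMat p q r h ^ n) 0 1 = q * y ∧
      (abMat p q r h ^ n) 1 0 = r * y ∧ p ^ n ≤ x ∧ 0 ≤ y := by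
  induction n with
  | zero => exact ⟨1, 0, by simp⟩
  | succ n ih =>
    obtain ⟨x, y, h1, h2, h3, h4, h5⟩ := ih
    have hx : 0 ≤ x := le_trans (by positivity) h4
    refine ⟨p * x + q * r * y, x + p * y, ?_, ?_, ?_, ?_, by positivity⟩
    · rw [pow_succ', sl_mul_apply, h1, h3]; simp; ring
    · rw [pow_succ, sl_mul_apply, h1, h2]; simp; ring
    · rw [pow_succ', sl_mul_apply, h1, h3]; simp; ring
    · have : 0 ≤ q * r * y := by positivity
      calc p ^ (n + 1) = p * p ^ n := by ring
        _ ≤ p * x := by gcongr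
        _ ≤ _ := by linarith

theorem sl_cayley (D : SL(2, ℤ)) (n : ℕ) : ∃ u v : ℤ,
    (D ^ n) 0 0 = u * D 0 0 + v ∧ (D ^ n) 0 1 = u * D 0 1 ∧ (D ^ n) 1 0 = u * D 1 0 ∧
    (D ^ n) 1 1 = u * D 1 1 + v := by
  induction n with
  | zero => exact ⟨0, 1, by simp⟩
  | succ n ih =>
    obtain ⟨u, v, h1, h2, h3, h4⟩ := ih
    have hd := sl_det D
    refine ⟨u * (D 0 0 + D 1 1) + v, -u, ?_, ?_, ?_, ?_⟩ <;>
      rw [pow_succ, sl_mul_apply] <;> simp only [h1, h2, h3, h4]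
    · linear_combination -u * hd
    · ring
    · ring
    · linear_combination -u * hd

theorem nonprim_struct (a b c : ℤ) (h : a * a - b * c = 1)
    (ha : 2 ≤ a) (hb : 0 < b) (hc : 0 < c) (hp : ¬ IsPrim (QuotientGroup.mk (abMat a b c h))) :
    ∃ (p q r : ℤ) (hD : p * p - q * r = 1) (n : ℕ), 2 ≤ n ∧ 2 ≤ p ∧ 0 < q ∧ 0 < r ∧ p ^ n ≤ a ∧
      abMat a b c h = abMat p q r hD ^ n := by
  unfold IsPrim at hp
  push Not at hp
  obtain ⟨δ, n, hn, hδ⟩ := hp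
  obtain ⟨D, rfl⟩ := QuotientGroup.mk_surjective δ
  have hDn : D ^ n = abMat a b c h ∨ D ^ n = -abMat a b c h := by
    rw [← psl_mk_eq, ← hδ]; rfl
  obtain ⟨s, hs, h1, h2, h3, h4⟩ : ∃ s : ℤ, s * s = 1 ∧ (D ^ n) 0 0 = s * a ∧ (D ^ n) 0 1 = s * b ∧
      (D ^ n) 1 0 = s * c ∧ (D ^ n) 1 1 = s * a := by
    rcases hDn with e | e
    · exact ⟨1, by simp [e]⟩
    · exact ⟨-1, by simp [e]⟩
  obtain ⟨u, v, u1, u2, u3, u4⟩ := sl_cayley D n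
  have hbc : 0 < (s * b) * (s * c) := by
    have : (s * b) * (s * c) = (s * s) * (b * c) := by ring
    rw [this, hs]; positivity
  have hu : u ≠ 0 := by
    rintro rfl
    rw [← h2, u2] at hbc
    simp at hbc
  have hpt : D 0 0 = D 1 1 := by
    have : u * (D 0 0 - D 1 1) = 0 := by
      have : u * D 0 0 + v = u * D 1 1 + v := by rw [← u1, ← u4, h1, h4]
      linarith
    rcases mul_eq_zero.1 this with q | q
    · exact absurd q hu
    · linarith
  have hqr : 0 < D 0 1 * D 1 0 := by
    rw [← h2, ← h3, u2, u3] at hbc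
    have : u * D 0 1 * (u * D 1 0) = (u * u) * (D 0 1 * D 1 0) := by ring
    rw [this] at hbc
    have hu2 : 0 < u * u := mul_self_pos.2 hu
    exact (pos_iff_pos_of_mul_pos hbc).1 hu2
  -- normalise sign
  obtain ⟨E, hE, hpos, hqrE, hptE⟩ : ∃ E : SL(2, ℤ), (E ^ n = abMat a b c h ∨ E ^ n = -abMat a b c h) ∧
      0 ≤ E 0 0 ∧ 0 < E 0 1 * E 1 0 ∧ E 0 0 = E 1 1 := by
    rcases le_total 0 (D 0 0) with hh | hh
    · exact ⟨D, hDn, hh, hqr, hpt⟩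
    · refine ⟨-D, ?_, by simpa using hh, by simpa using hqr, by simpa using hpt⟩
      rw [← psl_mk_eq, ← hδ]
      show (QuotientGroup.mk (-D) : PSL2Z) ^ n = _
      rw [psl_mk_neg]
  have hdE := sl_det E
  rw [← hptE] at hdE
  have hEE : E = abMat (E 0 0) (E 0 1) (E 1 0) hdE := by
    apply sl_ext <;> simp [hptE]
  have hp2 : 2 ≤ E 0 0 := by nlinarith
  set p := E 0 0
  set q := E 0 1
  set r := E 1 0
  rw [hEE] at hE
  obtain ⟨x, y, e1, e2, e3, e4, e5⟩ := ab_pow p q r hdE (by omega) hqrE.le n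
  have hppos : 0 < p ^ n := by positivity
  have hE' : abMat p q r hdE ^ n = abMat a b c h := by
    rcases hE with e | e
    · exact e
    · rw [e] at e1
      simp at e1
      omega
  rw [hE'] at e1 e2 e3
  simp at e1 e2 e3
  have hq : 0 < q := by
    rw [e2] at hb
    exact pos_of_mul_pos_left hb e5
  have hr : 0 < r := by
    rw [e3] at hc
    exact pos_of_mul_pos_left hc e5
  exact ⟨p, q, r, hdE, n, hn, hp2, hq, hr, by omega, hE'.symm⟩

/-- the matrix `S` -/
def slS : SL(2, ℤ) := ⟨!![0, -1; 1, 0], by simp [Matrix.det_fin_two]⟩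

theorem slS_00 : slS 0 0 = 0 := rfl
theorem slS_01 : slS 0 1 = -1 := rfl
theorem slS_10 : slS 1 0 = 1 := rfl
theorem slS_11 : slS 1 1 = 0 := rfl

/-- triples -/
def goodSet (N : ℕ) : Finset (ℕ × ℕ × ℕ) :=
  ((Finset.Icc 2 N) ×ˢ (Finset.Icc 1 (N ^ 2)) ×ˢ (Finset.Icc 1 (N ^ 2))).filter
    fun t => t.2.1 * t.2.2 + 1 = t.1 * t.1 ∧ ¬ (2 ∣ t.2.1 ∧ 2 ∣ t.2.2)

theorem mem_goodSet (N a b c : ℕ) : (a, b, c) ∈ goodSet N ↔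
    2 ≤ a ∧ a ≤ N ∧ b * c + 1 = a * a ∧ ¬ (2 ∣ b ∧ 2 ∣ c) := by
  unfold goodSet
  simp only [Finset.mem_filter, Finset.mem_product, Finset.mem_Icc]
  constructor
  · rintro ⟨⟨⟨h1, h2⟩, -⟩, h3, h4⟩
    exact ⟨h1, h2, h3, h4⟩
  · rintro ⟨h1, h2, h3, h4⟩
    have hb : b ≠ 0 := by rintro rfl; nlinarith
    have hc : c ≠ 0 := by rintro rfl; nlinarith
    have hb1 : 1 ≤ b := by omega
    have hc1 : 1 ≤ c := by omega
    exact ⟨⟨⟨h1, h2⟩, ⟨hb1, by nlinarith⟩, ⟨hc1, by nlinarith⟩⟩, h3, h4⟩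

open Classical in
/-- class representative -/
noncomputable def repOf (t : ℕ × ℕ × ℕ) : PSL2Z :=
  if h : ((t.1 : ℤ) * t.1 - (t.2.1 : ℤ) * t.2.2 = 1) then QuotientGroup.mk (abMat t.1 t.2.1 t.2.2 h) else 1

theorem good_eq {a b c : ℕ} (h : b * c + 1 = a * a) : (a : ℤ) * a - (b : ℤ) * c = 1 := by
  have : ((b * c + 1 : ℕ) : ℤ) = ((a * a : ℕ) : ℤ) := by rw [h]
  push_cast at this
  linarith

theorem repOf_eq {a b c : ℕ} (h : b * c + 1 = a * a) :
    repOf (a, b, c) = QuotientGroup.mk (abMat a b c (good_eq h)) := by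
  unfold repOf
  rw [dif_pos (good_eq h)]

theorem good_pos {a b c : ℕ} (ha : 2 ≤ a) (h : b * c + 1 = a * a) : 0 < b ∧ 0 < c := by
  have hb : b ≠ 0 := by rintro rfl; nlinarith
  have hc : c ≠ 0 := by rintro rfl; nlinarith
  omega

open Classical in
theorem nAmb_eq (s : ℝ) (N : ℕ) (hN : ∀ a : ℕ, 2 ≤ a → (2 * arcosh (a : ℝ) ≤ s ↔ a ≤ N)) :
    NAmbBoth s = ((goodSet N).filter fun t => IsPrim (repOf t)).card := by
  unfold NAmbBoth
  have htrace : ∀ (a b c : ℤ) (h) (s : ℝ), 2 ≤ a →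
      ((((|Matrix.trace ((abMat a b c h : SL(2, ℤ)) : Matrix (Fin 2) (Fin 2) ℤ)| : ℤ) : ℝ) / 2) = (a : ℝ)) := by
    intro a b c h s ha
    have : |Matrix.trace ((abMat a b c h : SL(2, ℤ)) : Matrix (Fin 2) (Fin 2) ℤ)| = 2 * a := by
      rw [Matrix.trace_fin_two, abMat_00, abMat_11, abs_of_nonneg (by omega)]; ring
    rw [this]; push_cast; ring
  rw [← Set.ncard_coe_finset]
  symm
  apply Set.ncard_congr (fun t _ => ConjClasses.mk (repOf t))
  · rintro ⟨a, b, c⟩ ht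
    simp only [Finset.coe_filter, Set.mem_ofPred_eq, mem_goodSet] at ht
    obtain ⟨⟨h1, h2, h3, h4⟩, h5⟩ := ht
    obtain ⟨hb, hc⟩ := good_pos h1 h3
    refine ⟨repOf (a, b, c), rfl, h5, ?_⟩
    rw [repOf_eq h3]
    refine ⟨?_, ?_, ?_, ?_⟩
    · rw [isHyp_mk, Matrix.trace_fin_two, abMat_00, abMat_11, abs_of_nonneg (by omega)]
      omega
    · rw [transLen_mk, htrace _ _ _ _ s (by omega)]
      exact_mod_cast (hN a h1).2 h2
    · exact ⟨_, IsConj.refl _, _, rfl, (amb1_iff _).2 rfl⟩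
    · apply exists_snd
      · omega
      · omega
      · intro hh; apply h4; omega
  · rintro ⟨a, b, c⟩ ⟨a', b', c'⟩ ht ht' hcl
    simp only [Finset.coe_filter, Set.mem_ofPred_eq, mem_goodSet] at ht ht'
    obtain ⟨⟨h1, h2, h3, h4⟩, h5⟩ := ht
    obtain ⟨⟨h1', h2', h3', h4'⟩, h5'⟩ := ht'
    obtain ⟨hb, hc⟩ := good_pos h1 h3
    obtain ⟨hb', hc'⟩ := good_pos h1' h3'
    rw [ConjClasses.mk_eq_mk_iff_isConj, repOf_eq h3, repOf_eq h3'] at hcl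
    rw [repOf_eq h3] at h5
    have := ab_inj a b c a' b' c' _ _ (by omega) (by omega) (by omega) (by omega) (by omega)
      (by omega) (by intro hh; apply h4; omega) h5 hcl
    simp only [Prod.mk.injEq]
    omega
  · rintro C ⟨γ, rfl, hprim, hhyp, hlen, ⟨δ, hδ, A, rfl, hA⟩, ⟨δ2, hδ2, hamb2⟩⟩
    rw [amb1_iff] at hA
    obtain ⟨G, rfl⟩ := QuotientGroup.mk_surjective γ
    have htr := abs_trace_eq hδ
    rw [isHyp_mk, htr] at hhyp
    rw [transLen_mk, htr] at hlen
    -- choose a positive representative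
    obtain ⟨a, b, c, h, ha, hb, hc, hconj⟩ : ∃ (a b c : ℤ) (h : a * a - b * c = 1), 2 ≤ a ∧ 0 < b ∧ 0 < c ∧
        IsConj (QuotientGroup.mk A : PSL2Z) (QuotientGroup.mk (abMat a b c h)) := by
      have key : ∀ B : SL(2, ℤ), B 0 0 = B 1 1 → 2 ≤ B 0 0 → ∃ (a b c : ℤ) (h : a * a - b * c = 1), 2 ≤ a ∧ 0 < b ∧ 0 < c ∧
        IsConj (QuotientGroup.mk B : PSL2Z) (QuotientGroup.mk (abMat a b c h)) := by
        intro B hB hB2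
        have hd := sl_det B
        rw [← hB] at hd
        have hpos : 0 < B 0 1 * B 1 0 := by nlinarith
        rcases pos_and_pos_or_neg_and_neg_of_mul_pos hpos with ⟨x, y⟩ | ⟨x, y⟩
        · refine ⟨B 0 0, B 0 1, B 1 0, hd, hB2, x, y, ?_⟩
          have : B = abMat (B 0 0) (B 0 1) (B 1 0) hd := by
            apply sl_ext <;> simp [hB]
          rw [← this]
        · refine ⟨B 0 0, -B 1 0, -B 0 1, by linarith, hB2, by omega, by omega, ?_⟩
          rw [psl_conj_iff]
          refine ⟨slS, Or.inl ?_⟩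
          apply sl_ext <;> simp only [sl_mul_apply, abMat_00, abMat_01, abMat_10, abMat_11, slS_00, slS_01,
            slS_10, slS_11] <;> simp [hB]
      rw [Matrix.trace_fin_two, ← hA] at hhyp
      rcases le_total 0 (A 0 0) with hh | hh
      · rw [abs_of_nonneg (by omega)] at hhyp
        exact key A hA (by omega)
      · rw [abs_of_nonpos (by omega)] at hhyp
        have := key (-A) (by simp [hA]) (by simp; omega)
        rwa [psl_mk_neg] at this
    have hconj' := hδ.trans hconj
    have hprim' := isPrim_conj hconj' hprim
    have hpar := not_both_even a b c h ha hb hc hprim' ⟨δ2, hconj'.symm.trans hδ2, hamb2⟩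
    have htr2 := abs_trace_eq hconj
    rw [htr2, htrace _ _ _ _ s ha] at hlen
    lift a to ℕ using by omega
    lift b to ℕ using by omega
    lift c to ℕ using by omega
    have h3 : b * c + 1 = a * a := by
      have : ((b * c + 1 : ℕ) : ℤ) = ((a * a : ℕ) : ℤ) := by push_cast; linarith
      exact_mod_cast this
    refine ⟨(a, b, c), ?_, ?_⟩
    · simp only [Finset.coe_filter, Set.mem_ofPred_eq, mem_goodSet]
      refine ⟨⟨by omega, (hN a (by omega)).1 (by exact_mod_cast hlen), h3, ?_⟩, ?_⟩
      · intro hh; apply hpar; omega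
      · rw [repOf_eq h3]; exact hprim'
    · rw [repOf_eq h3, ConjClasses.mk_eq_mk_iff_isConj]
      exact hconj'.symm

open Classical in
theorem nonprim_card (N : ℕ) :
    ((goodSet N).filter fun t => ¬ IsPrim (repOf t)).card ≤
      2 * ((Nat.sqrt N + 1) ^ 2 * (Nat.log 2 N + 1)) := by
  let M : (ℕ × ℕ) × ℕ × Bool → Matrix (Fin 2) (Fin 2) ℤ := fun x =>
    (if x.2.2 then !![(x.1.1 : ℤ), (x.1.2 : ℤ); (((x.1.1 * x.1.1 - 1) / x.1.2 : ℕ) : ℤ), (x.1.1 : ℤ)]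
      else !![(x.1.1 : ℤ), (((x.1.1 * x.1.1 - 1) / x.1.2 : ℕ) : ℤ); (x.1.2 : ℤ), (x.1.1 : ℤ)]) ^ x.2.1
  let f : (ℕ × ℕ) × ℕ × Bool → ℕ × ℕ × ℕ := fun x =>
    ((M x 0 0).toNat, (M x 0 1).toNat, (M x 1 0).toNat)
  let S := (Finset.range (Nat.sqrt N + 1) ×ˢ Finset.range (Nat.sqrt N + 1)) ×ˢ
    (Finset.range (Nat.log 2 N + 1) ×ˢ (Finset.univ : Finset Bool))
  have hS : S.card = 2 * ((Nat.sqrt N + 1) ^ 2 * (Nat.log 2 N + 1)) := by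
    simp [S, Finset.card_product]; ring
  rw [← hS]
  refine le_trans (Finset.card_le_card ?_) (Finset.card_image_le (s := S) (f := f))
  rintro ⟨a, b, c⟩ ht
  simp only [Finset.mem_filter, mem_goodSet] at ht
  obtain ⟨⟨h1, h2, h3, h4⟩, h5⟩ := ht
  obtain ⟨hb, hc⟩ := good_pos h1 h3
  rw [repOf_eq h3] at h5
  obtain ⟨p, q, r, hD, n, hn, hp, hq, hr, hpn, hA⟩ :=
    nonprim_struct a b c _ (by omega) (by omega) (by omega) h5
  lift p to ℕ using by omega
  lift q to ℕ using by omega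
  lift r to ℕ using by omega
  have hqr : q * r + 1 = p * p := by
    have : ((q * r + 1 : ℕ) : ℤ) = ((p * p : ℕ) : ℤ) := by push_cast; linarith
    exact_mod_cast this
  have hpn' : p ^ n ≤ N := le_trans (by exact_mod_cast hpn) h2
  have hp2 : 2 ≤ p := by omega
  have hps : p ≤ Nat.sqrt N := by
    rw [Nat.le_sqrt']
    exact le_trans (Nat.pow_le_pow_right (by omega) hn) hpn'
  have hnl : n ≤ Nat.log 2 N := by
    apply Nat.le_log_of_pow_le (by norm_num)
    exact le_trans (Nat.pow_le_pow_left hp2 n) hpn'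
  have hA' : ∀ i j, (abMat a b c (good_eq h3)) i j = ((!![(p:ℤ), q; r, p]) ^ n) i j := by
    intro i j; rw [hA, Matrix.SpecialLinearGroup.coe_pow]; rfl
  rw [Finset.mem_image]
  rcases lt_or_ge q p with hlt | hge
  · refine ⟨((p, q), n, true), ?_, ?_⟩
    · simp [S]; omega
    · have hM : M ((p, q), n, true) = (!![(p:ℤ), q; r, p]) ^ n := by
        have : (p * p - 1) / q = r := by
          rw [← hqr, Nat.add_sub_cancel, Nat.mul_div_cancel_left _ (by omega)]
        simp only [M, this]; rfl
      simp only [f, hM, ← hA']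
      simp
  · have hlt : r < p := by
      by_contra hh
      push Not at hh
      nlinarith
    refine ⟨((p, r), n, false), ?_, ?_⟩
    · simp [S]; omega
    · have hM : M ((p, r), n, false) = (!![(p:ℤ), q; r, p]) ^ n := by
        have : (p * p - 1) / r = q := by
          rw [← hqr, Nat.add_sub_cancel, Nat.mul_div_cancel _ (by omega)]
        simp only [M, this]; rfl
      simp only [f, hM, ← hA']
      simp


open Classical in
theorem class_count (P : ℤ → Prop) (m N : ℕ) (hm : 0 < m) (hmN : m ≤ N) (a0 : ℤ)
    (hP : ∀ a, P a ↔ a ≡ a0 [ZMOD m]) :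
    |(((Finset.Ioc m N).filter fun a : ℕ => P (a : ℤ)).card : ℝ) - (N : ℝ) / m| ≤ 2 := by
  obtain ⟨r, hr⟩ : ∃ r : ℕ, (r : ℤ) ≡ a0 [ZMOD m] := by
    have h0 : 0 ≤ a0 % (m : ℤ) := Int.emod_nonneg _ (by omega)
    refine ⟨(a0 % (m : ℤ)).toNat, ?_⟩
    rw [Int.toNat_of_nonneg h0]
    exact Int.mod_modEq _ _
  have hfil : ((Finset.Ioc m N).filter fun a : ℕ => P (a : ℤ)) =
      (Finset.Ioc m N).filter fun a : ℕ => a ≡ r [MOD m] := by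
    apply Finset.filter_congr
    intro a _
    rw [hP, ← Int.natCast_modEq_iff]
    exact ⟨fun h => h.trans hr.symm, fun h => h.trans hr⟩
  rw [hfil]
  have key := Nat.Ioc_filter_modEq_card m N hm r
  have hmR : (0 : ℝ) < m := by exact_mod_cast hm
  set x : ℚ := ((N : ℚ) - r) / m with hx
  set y : ℚ := ((m : ℚ) - r) / m with hy
  have hmQ : (0 : ℚ) < m := by exact_mod_cast hm
  have hxy : x - y = (N : ℚ) / m - 1 := by rw [hx, hy]; field_simp; ring
  have hge : (1 : ℚ) ≤ (N : ℚ) / m := by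
    rw [le_div_iff₀ hmQ]; simpa using (by exact_mod_cast hmN : (m : ℚ) ≤ N)
  have hmono : ⌊y⌋ ≤ ⌊x⌋ := Int.floor_mono (by linarith)
  rw [max_eq_left (by linarith)] at key
  have keyQ : ((((Finset.Ioc m N).filter fun a : ℕ => a ≡ r [MOD m]).card : ℤ) : ℚ) = (⌊x⌋ : ℚ) - ⌊y⌋ := by
    rw [key]; push_cast; ring
  have b1 := Int.floor_le x
  have b2 := Int.lt_floor_add_one x
  have b3 := Int.floor_le y
  have b4 := Int.lt_floor_add_one y
  have hQ : |((((Finset.Ioc m N).filter fun a : ℕ => a ≡ r [MOD m]).card : ℤ) : ℚ) - (N : ℚ) / m| ≤ 2 := by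
    rw [keyQ, abs_le]; constructor <;> linarith
  have : ((|((((Finset.Ioc m N).filter fun a : ℕ => a ≡ r [MOD m]).card : ℤ) : ℚ) - (N : ℚ) / m| : ℚ) : ℝ) ≤ ((2 : ℚ) : ℝ) := by
    exact_mod_cast hQ
  push_cast at this
  exact this

/-- odd pair condition -/
def CondO (u v : ℕ) (a : ℤ) : Prop := (u : ℤ) ∣ a - 1 ∧ (v : ℤ) ∣ a + 1

/-- even pair condition -/
def CondE (u v : ℕ) (a : ℤ) : Prop :=
  ∃ m1 m2 : ℤ, a = 2 * (u * m1) + 1 ∧ a = 2 * (v * m2) - 1 ∧ m1 % 2 = 1 ∧ m2 % 2 = 1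

theorem condO_class (u v : ℕ) (h : Nat.Coprime u v) :
    ∃ a0 : ℤ, ∀ a, CondO u v a ↔ a ≡ a0 [ZMOD ((u * v : ℕ) : ℤ)] := by
  have hc : IsCoprime (u : ℤ) (v : ℤ) := Nat.isCoprime_iff_coprime.2 h
  obtain ⟨x, y, hxy⟩ := hc
  -- a0 = 1 - 2 x u = -1 + 2 y v
  refine ⟨1 - 2 * (x * u), fun a => ?_⟩
  have e2 : 1 - 2 * (x * u) = -1 + 2 * (y * v) := by linarith
  unfold CondO
  constructor
  · rintro ⟨⟨s, hs⟩, ⟨t, ht⟩⟩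
    rw [Int.modEq_iff_dvd]
    push_cast
    apply IsCoprime.mul_dvd ⟨x, y, hxy⟩
    · exact ⟨-2 * x - s, by linear_combination -hs⟩
    · rw [e2]; exact ⟨2 * y - t, by linear_combination -ht⟩
  · intro hh
    rw [Int.modEq_iff_dvd] at hh
    obtain ⟨k, hk⟩ := hh
    push_cast at hk
    constructor
    · exact ⟨-2 * x - v * k, by linear_combination -hk⟩
    · exact ⟨2 * y - u * k, by linear_combination -hk + e2⟩

theorem condE_class (u v : ℕ) (h : Nat.Coprime u v) (hev : ¬ (u % 2 = 1 ∧ v % 2 = 1)) :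
    ∃ a0 : ℤ, ∀ a, CondE u v a ↔ a ≡ a0 [ZMOD ((4 * (u * v) : ℕ) : ℤ)] := by
  have hc : IsCoprime (u : ℤ) (v : ℤ) := Nat.isCoprime_iff_coprime.2 h
  obtain ⟨m1, m2, hm, hm1, hm2⟩ : ∃ m1 m2 : ℤ, v * m2 - u * m1 = 1 ∧ m1 % 2 = 1 ∧ m2 % 2 = 1 := by
    obtain ⟨x, y, hxy⟩ := hc
    have hxy' : (v : ℤ) * y - u * (-x) = 1 := by linarith
    generalize -x = x' at hxy'
    have hpar : ((v : ℤ) * y - u * x') % 2 = 1 := by rw [hxy']; rfl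
    have hnot : ¬ (u % 2 = 0 ∧ v % 2 = 0) := by
      rintro ⟨h1, h2⟩
      have := Nat.dvd_gcd (Nat.dvd_of_mod_eq_zero h1) (Nat.dvd_of_mod_eq_zero h2)
      rw [h] at this; omega
    rcases Nat.mod_two_eq_zero_or_one u with hu | hu
    · have hv : v % 2 = 1 := by omega
      have hy : y % 2 = 1 := by
        obtain ⟨u', rfl⟩ : ∃ u', u = 2 * u' := ⟨u / 2, by omega⟩
        obtain ⟨v', rfl⟩ : ∃ v', v = 2 * v' + 1 := ⟨v / 2, by omega⟩
        push_cast at hpar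
        have : (2 * (v' : ℤ) + 1) * y - 2 * u' * x' = 2 * (v' * y - u' * x') + y := by ring
        rw [this] at hpar; omega
      rcases Int.emod_two_eq_zero_or_one x' with hx | hx
      · exact ⟨x' + v, y + u, by linear_combination hxy', by omega, by omega⟩
      · exact ⟨x', y, hxy', hx, hy⟩
    · have hv : v % 2 = 0 := by omega
      have hy : x' % 2 = 1 := by
        obtain ⟨u', rfl⟩ : ∃ u', u = 2 * u' + 1 := ⟨u / 2, by omega⟩
        obtain ⟨v', rfl⟩ : ∃ v', v = 2 * v' := ⟨v / 2, by omega⟩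
        push_cast at hpar
        have : 2 * (v' : ℤ) * y - (2 * u' + 1) * x' = 2 * (v' * y - u' * x') - x' := by ring
        rw [this] at hpar; omega
      rcases Int.emod_two_eq_zero_or_one y with hx | hx
      · exact ⟨x' + v, y + u, by linear_combination hxy', by omega, by omega⟩
      · exact ⟨x', y, hxy', hy, hx⟩
  refine ⟨2 * (u * m1) + 1, fun a => ?_⟩
  unfold CondE
  rw [Int.modEq_iff_dvd]
  push_cast
  constructor
  · rintro ⟨k1, k2, e1, e2, hk1, hk2⟩
    obtain ⟨i, hi⟩ : ∃ i, m1 - k1 = 2 * i := ⟨(m1 - k1) / 2, by omega⟩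
    obtain ⟨j, hj⟩ : ∃ j, m2 - k2 = 2 * j := ⟨(m2 - k2) / 2, by omega⟩
    have heq : (u : ℤ) * i = v * j := by
      have : 4 * ((u : ℤ) * i) = 4 * (v * j) := by
        linear_combination (-2 * u) * hi + 2 * v * hj + e1 - e2 - 2 * hm
      linarith
    have : (v : ℤ) ∣ i := by
      apply hc.symm.dvd_of_dvd_mul_left
      exact ⟨j, heq⟩
    obtain ⟨w, hw⟩ := this
    exact ⟨w, by rw [e1]; linear_combination 2 * u * hi + 4 * u * hw⟩
  · rintro ⟨k, hk⟩
    refine ⟨m1 - 2 * v * k, m2 - 2 * u * k, by linear_combination -hk,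
      by linear_combination -hk - 2 * hm, ?_, ?_⟩
    · have : m1 - 2 * v * k = m1 - 2 * (v * k) := by ring
      rw [this]; omega
    · have : m2 - 2 * u * k = m2 - 2 * (u * k) := by ring
      rw [this]; omega


/-- pairs under the hyperbola -/
def hyp (N : ℕ) : Finset (ℕ × ℕ) :=
  (Finset.Icc 1 N ×ˢ Finset.Icc 1 N).filter fun p => p.1 * p.2 ≤ N

theorem mem_hyp (N u v : ℕ) : (u, v) ∈ hyp N ↔ 1 ≤ u ∧ 1 ≤ v ∧ u * v ≤ N := by
  unfold hyp
  simp only [Finset.mem_filter, Finset.mem_product, Finset.mem_Icc]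
  constructor
  · rintro ⟨⟨⟨h1, h2⟩, h3, h4⟩, h5⟩; exact ⟨h1, h3, h5⟩
  · rintro ⟨h1, h2, h3⟩
    exact ⟨⟨⟨h1, by nlinarith⟩, h2, by nlinarith⟩, h3⟩

/-- coprime, both odd -/
def OO (N : ℕ) : Finset (ℕ × ℕ) :=
  (hyp N).filter fun p => Nat.Coprime p.1 p.2 ∧ (p.1 % 2 = 1 ∧ p.2 % 2 = 1)

/-- coprime, not both odd -/
def EO (N : ℕ) : Finset (ℕ × ℕ) :=
  (hyp N).filter fun p => Nat.Coprime p.1 p.2 ∧ ¬ (p.1 % 2 = 1 ∧ p.2 % 2 = 1)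

theorem gcd_recover (u v w : ℕ) (hu : u ∣ w) (hv : Nat.Coprime v w) : Nat.gcd (u * v) w = u := by
  rw [Nat.Coprime.gcd_mul_right_cancel u hv]
  exact Nat.gcd_eq_left hu

open Classical in
theorem card_goodO (N : ℕ) :
    ((goodSet N).filter fun t => t.2.1 < t.1 ∧ t.2.1 % 2 = 1).card =
      ∑ p ∈ OO N, ((Finset.Ioc (p.1 * p.2) N).filter fun a : ℕ => CondO p.1 p.2 (a : ℤ)).card := by
  rw [← Finset.card_sigma]
  symm
  have hdat : ∀ u v a : ℕ, 1 ≤ u → 1 ≤ v → Nat.Coprime u v → u % 2 = 1 → v % 2 = 1 → u * v < a →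
      CondO u v (a : ℤ) → ∃ c, u * v * c + 1 = a * a ∧ Nat.gcd (u * v) (a - 1) = u ∧
        Nat.gcd (u * v) (a + 1) = v := by
    intro u v a hu hv hc hu2 hv2 hlt hC
    obtain ⟨h1, h2⟩ := hC
    have ha1 : 1 ≤ a := by omega
    have h1' : u ∣ a - 1 := by
      have : ((a - 1 : ℕ) : ℤ) = (a : ℤ) - 1 := by push_cast [ha1]; ring
      rw [← this] at h1; exact_mod_cast h1
    have h2' : v ∣ a + 1 := by exact_mod_cast h2
    obtain ⟨x, hx⟩ := h1'
    obtain ⟨y, hy⟩ := h2'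
    obtain ⟨k, rfl⟩ : ∃ k, a = k + 1 := ⟨a - 1, by omega⟩
    simp only [Nat.add_sub_cancel] at hx ⊢
    have odd_cop : ∀ w : ℕ, w % 2 = 1 → w ∣ k ∨ w ∣ k + 2 → Nat.Coprime w 2 := by
      intro w hw _
      rw [Nat.coprime_comm, Nat.coprime_two_left, Nat.odd_iff]; exact hw
    refine ⟨x * y, ?_, ?_, ?_⟩
    · have : u * v * (x * y) = (u * x) * (v * y) := by ring
      rw [this, ← hx, ← hy]; ring
    · apply gcd_recover _ _ _ ⟨x, hx⟩
      have hg : Nat.gcd v k ∣ 2 := by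
        have a1 : Nat.gcd v k ∣ k + 1 + 1 := (Nat.gcd_dvd_left v k).trans ⟨y, hy⟩
        have a2 : Nat.gcd v k ∣ k := Nat.gcd_dvd_right v k
        have := (Nat.dvd_add_right a2).1 (show Nat.gcd v k ∣ k + 2 from a1)
        exact this
      have h3 : Nat.gcd v k ∣ Nat.gcd v 2 := Nat.dvd_gcd (Nat.gcd_dvd_left _ _) hg
      rw [show Nat.gcd v 2 = 1 from by
        have : Nat.Coprime v 2 := by
          rw [Nat.coprime_comm, Nat.coprime_two_left, Nat.odd_iff]; exact hv2
        exact this] at h3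
      exact Nat.dvd_one.1 h3
    · rw [mul_comm u v]
      apply gcd_recover _ _ _ ⟨y, hy⟩
      have hg : Nat.gcd u (k + 1 + 1) ∣ 2 := by
        have a1 : Nat.gcd u (k + 1 + 1) ∣ k := (Nat.gcd_dvd_left u _).trans ⟨x, hx⟩
        have a2 : Nat.gcd u (k + 1 + 1) ∣ k + 1 + 1 := Nat.gcd_dvd_right u _
        have := (Nat.dvd_add_right a1).1 (show Nat.gcd u (k + 1 + 1) ∣ k + 2 from a2)
        exact this
      have h3 : Nat.gcd u (k + 1 + 1) ∣ Nat.gcd u 2 := Nat.dvd_gcd (Nat.gcd_dvd_left _ _) hg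
      rw [show Nat.gcd u 2 = 1 from by
        have : Nat.Coprime u 2 := by
          rw [Nat.coprime_comm, Nat.coprime_two_left, Nat.odd_iff]; exact hu2
        exact this] at h3
      exact Nat.dvd_one.1 h3
  apply Finset.card_bij
    (fun (x : (_ : ℕ × ℕ) × ℕ) _ => (x.2, x.1.1 * x.1.2, (x.2 * x.2 - 1) / (x.1.1 * x.1.2)))
  · rintro ⟨⟨u, v⟩, a⟩ hx
    simp only [Finset.mem_sigma, OO, Finset.mem_filter, mem_hyp, Finset.mem_Ioc] at hx
    obtain ⟨⟨⟨hu, hv, huv⟩, hc, hu2, hv2⟩, ⟨hlt, haN⟩, hC⟩ := hx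
    obtain ⟨c, h1, h2, h3⟩ := hdat u v a hu hv hc hu2 hv2 hlt hC
    have hpos : 0 < u * v := Nat.mul_pos hu hv
    have hodd : (u * v) % 2 = 1 := by rw [Nat.mul_mod, hu2, hv2]
    simp only [Finset.mem_filter, mem_goodSet]
    have hcc : (a * a - 1) / (u * v) = c := by
      rw [← h1, Nat.add_sub_cancel, Nat.mul_div_cancel_left _ hpos]
    rw [hcc]
    refine ⟨⟨by omega, haN, h1, by omega⟩, hlt, hodd⟩
  · rintro ⟨⟨u, v⟩, a⟩ hx ⟨⟨u', v'⟩, a'⟩ hx' heq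
    simp only [Finset.mem_sigma, OO, Finset.mem_filter, mem_hyp, Finset.mem_Ioc] at hx hx'
    obtain ⟨⟨⟨hu, hv, huv⟩, hc, hu2, hv2⟩, ⟨hlt, haN⟩, hC⟩ := hx
    obtain ⟨⟨⟨hu', hv', huv'⟩, hc', hu2', hv2'⟩, ⟨hlt', haN'⟩, hC'⟩ := hx'
    obtain ⟨c, h1, h2, h3⟩ := hdat u v a hu hv hc hu2 hv2 hlt hC
    obtain ⟨c', h1', h2', h3'⟩ := hdat u' v' a' hu' hv' hc' hu2' hv2' hlt' hC'
    simp only [Prod.mk.injEq] at heq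
    obtain ⟨ea, eb, _⟩ := heq
    subst ea
    rw [eb] at h2 h3
    have e1 : u = u' := h2.symm.trans h2'
    have e2 : v = v' := h3.symm.trans h3'
    subst e1 e2
    rfl
  · rintro ⟨a, b, c⟩ ht
    simp only [Finset.mem_filter, mem_goodSet] at ht
    obtain ⟨⟨ha2, haN, h, hn⟩, hlt, hodd⟩ := ht
    obtain ⟨hb, hc⟩ := good_pos ha2 h
    obtain ⟨k, rfl⟩ : ∃ k, a = k + 1 := ⟨a - 1, by omega⟩
    have hbk : b ∣ k * (k + 2) := ⟨c, by nlinarith⟩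
    have hb2 : Nat.Coprime b 2 := by
      rw [Nat.coprime_comm, Nat.coprime_two_left, Nat.odd_iff]; exact hodd
    have hcop : Nat.Coprime (Nat.gcd b k) (Nat.gcd b (k + 2)) := by
      have hg : Nat.gcd (Nat.gcd b k) (Nat.gcd b (k + 2)) ∣ Nat.gcd b 2 := by
        apply Nat.dvd_gcd
        · exact (Nat.gcd_dvd_left _ _).trans (Nat.gcd_dvd_left _ _)
        · have a1 := (Nat.gcd_dvd_left (Nat.gcd b k) (Nat.gcd b (k + 2))).trans (Nat.gcd_dvd_right _ _)
          have a2 := (Nat.gcd_dvd_right (Nat.gcd b k) (Nat.gcd b (k + 2))).trans (Nat.gcd_dvd_right _ _)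
          exact (Nat.dvd_add_right a1).1 a2
      rw [hb2] at hg
      exact Nat.dvd_one.1 hg
    have hprod : Nat.gcd b k * Nat.gcd b (k + 2) = b := by
      apply Nat.dvd_antisymm
      · exact hcop.mul_dvd_of_dvd_of_dvd (Nat.gcd_dvd_left _ _) (Nat.gcd_dvd_left _ _)
      · have := Nat.gcd_mul_right_dvd_mul_gcd b k (k + 2)
        rwa [Nat.gcd_eq_left hbk] at this
    have p1 : 1 ≤ Nat.gcd b k := Nat.gcd_pos_of_pos_left _ hb
    have p2 : 1 ≤ Nat.gcd b (k + 2) := Nat.gcd_pos_of_pos_left _ hb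
    refine ⟨⟨(Nat.gcd b k, Nat.gcd b (k + 2)), k + 1⟩, ?_, ?_⟩
    · simp only [Finset.mem_sigma, OO, Finset.mem_filter, mem_hyp, Finset.mem_Ioc]
      rw [hprod]
      have o : ∀ g, g ∣ b → g % 2 = 1 := by
        rintro g ⟨e, rfl⟩
        rw [← Nat.odd_iff] at hodd ⊢
        exact (Nat.odd_mul.1 hodd).1
      refine ⟨⟨⟨p1, p2, by omega⟩, hcop, o _ (Nat.gcd_dvd_left _ _), o _ (Nat.gcd_dvd_left _ _)⟩,
        ⟨hlt, haN⟩, ?_, ?_⟩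
      · have : (Nat.gcd b k : ℤ) ∣ (k : ℤ) := by exact_mod_cast Nat.gcd_dvd_right b k
        simpa using this
      · have : (Nat.gcd b (k + 2) : ℤ) ∣ ((k + 2 : ℕ) : ℤ) := by
          exact_mod_cast Nat.gcd_dvd_right b (k + 2)
        push_cast at this ⊢
        rwa [show (k : ℤ) + 1 + 1 = k + 2 by ring]
    · simp only [hprod]
      rw [← h, Nat.add_sub_cancel, Nat.mul_div_cancel_left _ hb]

open Classical in
theorem card_goodE (N : ℕ) :
    ((goodSet N).filter fun t => t.2.1 < t.1 ∧ t.2.1 % 2 = 0).card =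
      ∑ p ∈ EO (N / 4),
        ((Finset.Ioc (4 * (p.1 * p.2)) N).filter fun a : ℕ => CondE p.1 p.2 (a : ℤ)).card := by
  rw [← Finset.card_sigma]
  symm
  have hdat : ∀ u v a : ℕ, 1 ≤ u → 1 ≤ v → Nat.Coprime u v → 4 * (u * v) < a →
      CondE u v (a : ℤ) → ∃ c, 4 * (u * v) * c + 1 = a * a ∧ c % 2 = 1 ∧
        Nat.gcd (u * v) ((a - 1) / 2) = u ∧ Nat.gcd (u * v) ((a + 1) / 2) = v := by
    intro u v a hu hv hc hlt hC
    obtain ⟨m1, m2, h1, h2, h3, h4⟩ := hC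
    have q1 : 0 ≤ m1 := by
      by_contra hh
      push Not at hh
      have : (u : ℤ) * m1 < 0 := mul_neg_of_pos_of_neg (by exact_mod_cast hu) hh
      omega
    have q2 : 0 ≤ m2 := by
      by_contra hh
      push Not at hh
      have : (v : ℤ) * m2 < 0 := mul_neg_of_pos_of_neg (by exact_mod_cast hv) hh
      omega
    lift m1 to ℕ using q1
    lift m2 to ℕ using q2
    have h1' : a = 2 * (u * m1) + 1 := by exact_mod_cast h1
    have h2' : a + 1 = 2 * (v * m2) := by
      have : (a : ℤ) + 1 = 2 * (v * m2) := by linarith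
      exact_mod_cast this
    have d1 : (a - 1) / 2 = u * m1 := by omega
    have d2 : (a + 1) / 2 = v * m2 := by omega
    have d3 : u * m1 + 1 = v * m2 := by omega
    rw [d1, d2]
    refine ⟨m1 * m2, ?_, ?_, ?_, ?_⟩
    · have : 4 * (u * v) * (m1 * m2) = (2 * (u * m1)) * (2 * (v * m2)) := by ring
      rw [this, ← h2', h1']; ring
    · have e1 : m1 % 2 = 1 := by omega
      have e2 : m2 % 2 = 1 := by omega
      rw [Nat.mul_mod, e1, e2]
    · apply gcd_recover _ _ _ ⟨m1, rfl⟩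
      have : Nat.Coprime (v * m2) (u * m1) := by rw [← d3]; simp
      exact this.coprime_dvd_left ⟨m2, rfl⟩
    · rw [mul_comm u v]
      apply gcd_recover _ _ _ ⟨m2, rfl⟩
      have : Nat.Coprime (u * m1) (v * m2) := by rw [← d3]; simp
      exact this.coprime_dvd_left ⟨m1, rfl⟩
  apply Finset.card_bij
    (fun (x : (_ : ℕ × ℕ) × ℕ) _ =>
      (x.2, 4 * (x.1.1 * x.1.2), (x.2 * x.2 - 1) / (4 * (x.1.1 * x.1.2))))
  · rintro ⟨⟨u, v⟩, a⟩ hx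
    simp only [Finset.mem_sigma, EO, Finset.mem_filter, mem_hyp, Finset.mem_Ioc] at hx
    obtain ⟨⟨⟨hu, hv, huv⟩, hc, hev⟩, ⟨hlt, haN⟩, hC⟩ := hx
    obtain ⟨c, h1, hc2, h2, h3⟩ := hdat u v a hu hv hc hlt hC
    have hpos : 0 < u * v := Nat.mul_pos hu hv
    simp only [Finset.mem_filter, mem_goodSet]
    have hcc : (a * a - 1) / (4 * (u * v)) = c := by
      rw [← h1, Nat.add_sub_cancel, Nat.mul_div_cancel_left _ (by omega)]
    rw [hcc]
    refine ⟨⟨by omega, haN, h1, by omega⟩, hlt, by omega⟩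
  · rintro ⟨⟨u, v⟩, a⟩ hx ⟨⟨u', v'⟩, a'⟩ hx' heq
    simp only [Finset.mem_sigma, EO, Finset.mem_filter, mem_hyp, Finset.mem_Ioc] at hx hx'
    obtain ⟨⟨⟨hu, hv, huv⟩, hc, hev⟩, ⟨hlt, haN⟩, hC⟩ := hx
    obtain ⟨⟨⟨hu', hv', huv'⟩, hc', hev'⟩, ⟨hlt', haN'⟩, hC'⟩ := hx'
    obtain ⟨c, h1, hc2, h2, h3⟩ := hdat u v a hu hv hc hlt hC
    obtain ⟨c', h1', hc2', h2', h3'⟩ := hdat u' v' a' hu' hv' hc' hlt' hC'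
    simp only [Prod.mk.injEq] at heq
    obtain ⟨ea, eb, _⟩ := heq
    subst ea
    have eb' : u * v = u' * v' := by omega
    rw [eb'] at h2 h3
    have e1 : u = u' := h2.symm.trans h2'
    have e2 : v = v' := h3.symm.trans h3'
    subst e1 e2
    rfl
  · rintro ⟨a, b, c⟩ ht
    simp only [Finset.mem_filter, mem_goodSet] at ht
    obtain ⟨⟨ha2, haN, h, hn⟩, hlt, hev⟩ := ht
    obtain ⟨hb, hc⟩ := good_pos ha2 h
    have hc2 : c % 2 = 1 := by omega
    obtain ⟨b0, rfl⟩ : ∃ b0, b = 2 * b0 := ⟨b / 2, by omega⟩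
    have hodd : a % 2 = 1 := by
      rcases Nat.mod_two_eq_zero_or_one a with h0 | h0
      · obtain ⟨a', rfl⟩ : ∃ a', a = 2 * a' := ⟨a / 2, by omega⟩
        have : 2 * (b0 * c) + 1 = 2 * (a' * (2 * a')) := by linarith
        omega
      · exact h0
    obtain ⟨m, rfl⟩ : ∃ m, a = 2 * m + 1 := ⟨a / 2, by omega⟩
    have hbc : b0 * c = 2 * (m * (m + 1)) := by nlinarith
    have hb0 : 2 ∣ b0 := by
      have : 2 ∣ b0 * c := ⟨_, hbc⟩
      have hc' : Nat.Coprime 2 c := by rw [Nat.coprime_two_left, Nat.odd_iff]; exact hc2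
      exact hc'.dvd_of_dvd_mul_right this
    obtain ⟨b', rfl⟩ := hb0
    have hb'c : m * (m + 1) = b' * c := by linarith
    have hb'2 : b' % 2 = 0 := by
      have : 2 ∣ b' * c := by rw [← hb'c]; exact (Nat.even_mul_succ_self m).two_dvd
      have hc' : Nat.Coprime 2 c := by rw [Nat.coprime_two_left, Nat.odd_iff]; exact hc2
      have := hc'.dvd_of_dvd_mul_right this
      omega
    have hb' : 0 < b' := by omega
    have hcm : Nat.Coprime m (m + 1) := by simp
    have hbk : b' ∣ m * (m + 1) := ⟨c, hb'c⟩
    have hcop : Nat.Coprime (Nat.gcd b' m) (Nat.gcd b' (m + 1)) :=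
      (hcm.coprime_dvd_left (Nat.gcd_dvd_right _ _)).coprime_dvd_right (Nat.gcd_dvd_right _ _)
    have hprod : Nat.gcd b' m * Nat.gcd b' (m + 1) = b' := by
      rw [← hcm.gcd_mul, Nat.gcd_eq_left hbk]
    have p1 : 1 ≤ Nat.gcd b' m := Nat.gcd_pos_of_pos_left _ hb'
    have p2 : 1 ≤ Nat.gcd b' (m + 1) := Nat.gcd_pos_of_pos_left _ hb'
    refine ⟨⟨(Nat.gcd b' m, Nat.gcd b' (m + 1)), 2 * m + 1⟩, ?_, ?_⟩
    · simp only [Finset.mem_sigma, EO, Finset.mem_filter, mem_hyp, Finset.mem_Ioc]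
      rw [hprod]
      obtain ⟨x, hx⟩ := Nat.gcd_dvd_right b' m
      obtain ⟨y, hy⟩ := Nat.gcd_dvd_right b' (m + 1)
      have hxy : x * y = c := by
        have : b' * (x * y) = b' * c := by
          rw [← hb'c]
          conv_rhs => rw [hy]
          conv_rhs => arg 1; rw [hx]
          conv_lhs => rw [← hprod]
          ring
        exact Nat.eq_of_mul_eq_mul_left hb' this
      have hxo : Odd (x * y) := by rw [hxy, Nat.odd_iff]; exact hc2
      obtain ⟨ox, oy⟩ := Nat.odd_mul.1 hxo
      rw [Nat.odd_iff] at ox oy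
      refine ⟨⟨⟨p1, p2, by omega⟩, hcop, ?_⟩, ⟨by omega, haN⟩, x, y, ?_, ?_, by omega, by omega⟩
      · rintro ⟨o1, o2⟩
        have : (Nat.gcd b' m * Nat.gcd b' (m + 1)) % 2 = 1 := by rw [Nat.mul_mod, o1, o2]
        rw [hprod] at this; omega
      · have : (m : ℤ) = (Nat.gcd b' m : ℤ) * x := by exact_mod_cast hx
        rw [← this]; push_cast; ring
      · have : ((m + 1 : ℕ) : ℤ) = (Nat.gcd b' (m + 1) : ℤ) * y := by exact_mod_cast hy
        rw [← this]; push_cast; ring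
    · simp only [hprod]
      rw [← h, Nat.add_sub_cancel, show 2 * (2 * b') * c = 4 * b' * c by ring,
        Nat.mul_div_cancel_left _ (by omega)]
      rw [show 2 * (2 * b') = 4 * b' by ring]

theorem card_good_half (N : ℕ) :
    (goodSet N).card = 2 * (((goodSet N).filter fun t => t.2.1 < t.1 ∧ t.2.1 % 2 = 1).card +
      ((goodSet N).filter fun t => t.2.1 < t.1 ∧ t.2.1 % 2 = 0).card) := by
  have e1 : ((goodSet N).filter fun t => t.2.1 < t.1).card =
      ((goodSet N).filter fun t => t.2.1 < t.1 ∧ t.2.1 % 2 = 1).card +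
      ((goodSet N).filter fun t => t.2.1 < t.1 ∧ t.2.1 % 2 = 0).card := by
    rw [← Finset.card_filter_add_card_filter_not (s := (goodSet N).filter fun t => t.2.1 < t.1)
      (fun t => t.2.1 % 2 = 1), Finset.filter_filter, Finset.filter_filter]
    congr 2
    apply Finset.filter_congr
    intro t _
    constructor <;> rintro ⟨h1, h2⟩ <;> exact ⟨h1, by omega⟩
  have e2 : ((goodSet N).filter fun t => ¬ t.2.1 < t.1).card =
      ((goodSet N).filter fun t => t.2.1 < t.1).card := by
    apply Finset.card_bij (fun t _ => (t.1, t.2.2, t.2.1))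
    · rintro ⟨a, b, c⟩ ht
      simp only [Finset.mem_filter, mem_goodSet] at ht ⊢
      obtain ⟨⟨h1, h2, h3, h4⟩, h5⟩ := ht
      refine ⟨⟨h1, h2, by rw [mul_comm]; exact h3, fun h => h4 ⟨h.2, h.1⟩⟩, ?_⟩
      by_contra hh
      push Not at h5 hh
      nlinarith [Nat.mul_le_mul h5 hh]
    · rintro ⟨a, b, c⟩ _ ⟨a', b', c'⟩ _ h
      simp only [Prod.mk.injEq] at h ⊢
      tauto
    · rintro ⟨a, b, c⟩ ht
      simp only [Finset.mem_filter, mem_goodSet] at ht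
      obtain ⟨⟨h1, h2, h3, h4⟩, h5⟩ := ht
      refine ⟨(a, c, b), ?_, rfl⟩
      simp only [Finset.mem_filter, mem_goodSet]
      refine ⟨⟨h1, h2, by rw [mul_comm]; exact h3, fun h => h4 ⟨h.2, h.1⟩⟩, ?_⟩
      intro hh
      obtain ⟨k, rfl⟩ : ∃ k, a = k + 1 := ⟨a - 1, by omega⟩
      have : b * c ≤ k * k := Nat.mul_le_mul (by omega) (by omega)
      nlinarith
  rw [← Finset.card_filter_add_card_filter_not (s := goodSet N) (fun t => t.2.1 < t.1), e2, e1]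
  ring


/-- weighted sum -/
noncomputable def Asum (χ : ℕ → ℝ) (N : ℕ) : ℝ := ∑ p ∈ hyp N, χ p.1 * χ p.2 / ((p.1 : ℝ) * p.2)

/-- weighted coprime sum -/
noncomputable def Csum (χ : ℕ → ℝ) (N : ℕ) : ℝ :=
  ∑ p ∈ (hyp N).filter (fun p => Nat.Coprime p.1 p.2), χ p.1 * χ p.2 / ((p.1 : ℝ) * p.2)

/-- odd indicator -/
noncomputable def chiO (n : ℕ) : ℝ := if n % 2 = 1 then 1 else 0

theorem OO_sum (N : ℕ) : ∑ p ∈ OO N, 1 / ((p.1 : ℝ) * p.2) = Csum chiO N := by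
  unfold OO Csum
  rw [← Finset.filter_filter, Finset.sum_filter]
  apply Finset.sum_congr rfl
  rintro ⟨u, v⟩ _
  unfold chiO
  by_cases h1 : u % 2 = 1 <;> by_cases h2 : v % 2 = 1 <;> simp [h1, h2]

theorem EO_sum (N : ℕ) :
    ∑ p ∈ EO N, 1 / ((p.1 : ℝ) * p.2) = Csum (fun _ => 1) N - Csum chiO N := by
  rw [← OO_sum]
  unfold OO EO Csum
  rw [← Finset.filter_filter, ← Finset.filter_filter, eq_sub_iff_add_eq, add_comm]
  rw [Finset.sum_filter_add_sum_filter_not]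
  simp

theorem card_good_approx (N : ℕ) :
    |((goodSet N).card : ℝ) - 2 * (N * (Csum chiO N +
      1 / 4 * (Csum (fun _ => 1) (N / 4) - Csum chiO (N / 4))))| ≤ 8 * ((hyp N).card : ℝ) := by
  classical
  have hO : |((((goodSet N).filter fun t => t.2.1 < t.1 ∧ t.2.1 % 2 = 1).card : ℕ) : ℝ)
      - N * Csum chiO N| ≤ 2 * ((hyp N).card : ℝ) := by
    rw [card_goodO, ← OO_sum]
    push_cast
    rw [Finset.mul_sum, ← Finset.sum_sub_distrib]
    refine (Finset.abs_sum_le_sum_abs _ _).trans ?_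
    calc _ ≤ ∑ p ∈ OO N, (2 : ℝ) := by
          apply Finset.sum_le_sum
          rintro ⟨u, v⟩ hp
          simp only [OO, Finset.mem_filter, mem_hyp] at hp
          obtain ⟨⟨h1, h2, h3⟩, h4, h5⟩ := hp
          obtain ⟨a0, ha0⟩ := condO_class u v h4
          have := class_count (CondO u v) (u * v) N (Nat.mul_pos h1 h2) h3 a0 ha0
          push_cast at this
          rw [mul_one_div]
          exact this
      _ = 2 * ((OO N).card : ℝ) := by rw [Finset.sum_const, nsmul_eq_mul, mul_comm]
      _ ≤ 2 * ((hyp N).card : ℝ) := by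
          have : (OO N).card ≤ (hyp N).card := Finset.card_filter_le _ _
          have : ((OO N).card : ℝ) ≤ (hyp N).card := by exact_mod_cast this
          linarith
  have hE : |((((goodSet N).filter fun t => t.2.1 < t.1 ∧ t.2.1 % 2 = 0).card : ℕ) : ℝ)
      - N * (1 / 4 * (Csum (fun _ => 1) (N / 4) - Csum chiO (N / 4)))| ≤ 2 * ((hyp N).card : ℝ) := by
    rw [card_goodE, ← EO_sum]
    push_cast
    rw [← mul_assoc, Finset.mul_sum, ← Finset.sum_sub_distrib]
    refine (Finset.abs_sum_le_sum_abs _ _).trans ?_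
    calc _ ≤ ∑ p ∈ EO (N / 4), (2 : ℝ) := by
          apply Finset.sum_le_sum
          rintro ⟨u, v⟩ hp
          simp only [EO, Finset.mem_filter, mem_hyp] at hp
          obtain ⟨⟨h1, h2, h3⟩, h4, h5⟩ := hp
          obtain ⟨a0, ha0⟩ := condE_class u v h4 h5
          have hpos := Nat.mul_pos h1 h2
          have := class_count (CondE u v) (4 * (u * v)) N (by omega) (by omega) a0 ha0
          push_cast at this
          have e : (N : ℝ) * (1 / 4) * (1 / ((u : ℝ) * v)) = N / (4 * (u * v)) := by
            have : (u : ℝ) ≠ 0 := by positivity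
            have : (v : ℝ) ≠ 0 := by positivity
            field_simp
          rw [e]
          exact this
      _ = 2 * ((EO (N / 4)).card : ℝ) := by rw [Finset.sum_const, nsmul_eq_mul, mul_comm]
      _ ≤ 2 * ((hyp N).card : ℝ) := by
          have h1 : (EO (N / 4)).card ≤ (hyp (N / 4)).card := Finset.card_filter_le _ _
          have h2 : (hyp (N / 4)).card ≤ (hyp N).card := by
            apply Finset.card_le_card
            rintro ⟨u, v⟩ h
            rw [mem_hyp] at h ⊢
            exact ⟨h.1, h.2.1, by omega⟩
          have : ((EO (N / 4)).card : ℝ) ≤ (hyp N).card := by exact_mod_cast h1.trans h2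
          linarith
  rw [card_good_half]
  push_cast
  rw [abs_le] at hO hE ⊢
  constructor <;> linarith [hO.1, hO.2, hE.1, hE.2]

/-- sum over hyp as iterated sum -/
theorem sum_hyp (f : ℕ → ℕ → ℝ) (N : ℕ) :
    ∑ p ∈ hyp N, f p.1 p.2 = ∑ u ∈ Finset.Icc 1 N, ∑ v ∈ Finset.Icc 1 (N / u), f u v := by
  rw [Finset.sum_sigma']
  apply Finset.sum_bij' (fun p _ => (⟨p.1, p.2⟩ : (_ : ℕ) × ℕ)) (fun x _ => (x.1, x.2))
  · rintro ⟨u, v⟩ h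
    rw [mem_hyp] at h
    obtain ⟨h1, h2, h3⟩ := h
    simp only [Finset.mem_sigma, Finset.mem_Icc]
    refine ⟨⟨h1, by nlinarith⟩, h2, ?_⟩
    rw [Nat.le_div_iff_mul_le h1, mul_comm]; exact h3
  · rintro ⟨u, v⟩ h
    simp only [Finset.mem_sigma, Finset.mem_Icc] at h
    obtain ⟨⟨h1, h2⟩, h3, h4⟩ := h
    rw [mem_hyp]
    refine ⟨h1, h3, ?_⟩
    rw [Nat.le_div_iff_mul_le h1, mul_comm] at h4; exact h4
  · rintro ⟨u, v⟩ _; rfl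
  · rintro ⟨u, v⟩ _; rfl
  · rintro ⟨u, v⟩ _; rfl

/-- real harmonic sum -/
noncomputable def Hs (n : ℕ) : ℝ := ∑ u ∈ Finset.Icc 1 n, 1 / (u : ℝ)

theorem Hs_eq (n : ℕ) : Hs n = ((harmonic n : ℚ) : ℝ) := by
  rw [harmonic_eq_sum_Icc, Hs]
  push_cast
  simp

theorem Hs_le (n : ℕ) : Hs n ≤ 1 + Real.log n := by
  rw [Hs_eq]; exact harmonic_le_one_add_log n

theorem Hs_ge (n : ℕ) : Real.log n ≤ Hs n := by
  rw [Hs_eq]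
  rcases Nat.eq_zero_or_pos n with rfl | h
  · simp
  · refine le_trans ?_ (log_add_one_le_harmonic n)
    apply Real.log_le_log (by exact_mod_cast h)
    push_cast; linarith

theorem Hs_nonneg (n : ℕ) : 0 ≤ Hs n := Finset.sum_nonneg fun _ _ => by positivity

theorem card_hyp_le (N : ℕ) : ((hyp N).card : ℝ) ≤ N * (1 + Real.log N) := by
  have h := sum_hyp (fun _ _ => 1) N
  simp only [Finset.sum_const, nsmul_eq_mul, mul_one, Nat.card_Icc, Nat.add_sub_cancel] at h
  rw [h]
  refine le_trans ?_ (mul_le_mul_of_nonneg_left (Hs_le N) (Nat.cast_nonneg N))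
  unfold Hs
  rw [Finset.mul_sum]
  apply Finset.sum_le_sum
  intro u _
  rw [mul_one_div]
  exact Nat.cast_div_le

/-- log floor bounds -/
theorem log_div_floor (N d : ℕ) (hd : 1 ≤ d) :
    Real.log (N / d : ℕ) ≤ Real.log N ∧
    Real.log N - Real.log (N / d : ℕ) ≤ Real.log d + Real.log 2 := by
  have l2 : 0 ≤ Real.log 2 := Real.log_nonneg (by norm_num)
  have ld : 0 ≤ Real.log d := Real.log_nonneg (by exact_mod_cast hd)
  have lN : 0 ≤ Real.log N := Real.log_natCast_nonneg N
  rcases Nat.eq_zero_or_pos (N / d) with h | h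
  · rw [h]
    simp only [Nat.cast_zero, Real.log_zero, sub_zero]
    refine ⟨lN, ?_⟩
    rcases Nat.eq_zero_or_pos N with h0 | h0
    · rw [h0]; simp; linarith
    · have : N < d := (Nat.div_eq_zero_iff_lt hd).1 h
      have := Real.log_le_log (by exact_mod_cast h0) (by exact_mod_cast this.le : (N : ℝ) ≤ d)
      linarith
  · have hq : (0 : ℝ) < (N / d : ℕ) := by exact_mod_cast h
    have hdR : (0 : ℝ) < d := by exact_mod_cast hd
    have hle : N / d ≤ N := Nat.div_le_self _ _
    have hNpos : 0 < N := lt_of_lt_of_le h hle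
    refine ⟨Real.log_le_log hq (by exact_mod_cast hle), ?_⟩
    have h1 : N ≤ d * 2 * (N / d) := by
      have := Nat.div_add_mod N d
      have := Nat.mod_lt N hd
      nlinarith
    have h2 : (N : ℝ) ≤ d * 2 * (N / d : ℕ) := by exact_mod_cast h1
    have := Real.log_le_log (by exact_mod_cast hNpos) h2
    rw [Real.log_mul (by positivity) (by positivity), Real.log_mul (by positivity) (by positivity)] at this
    linarith

theorem sum_log_div (N : ℕ) :
    |∑ u ∈ Finset.Icc 1 N, Real.log u / u - Real.log N ^ 2 / 2| ≤ 2 * Hs N := by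
  induction N with
  | zero => simp [Hs]
  | succ n ih =>
    rcases Nat.eq_zero_or_pos n with rfl | hn
    · simp [Hs]
    have hs : Hs (n + 1) = Hs n + 1 / ((n + 1 : ℕ) : ℝ) := by
      unfold Hs; rw [Finset.sum_Icc_succ_top (by omega)]
    rw [Finset.sum_Icc_succ_top (by omega), hs]
    have hnR : (1 : ℝ) ≤ n := by exact_mod_cast hn
    set L := Real.log ((n + 1 : ℕ) : ℝ) with hL
    set x := L - Real.log n with hx
    have hx' : x = Real.log (1 + 1 / (n : ℝ)) := by
      rw [hx, hL, ← Real.log_div (by positivity) (by positivity)]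
      congr 1
      push_cast
      field_simp
    have hx1 : x ≤ 1 / n := by
      rw [hx']
      have := Real.log_le_sub_one_of_pos (show (0 : ℝ) < 1 + 1 / n by positivity)
      linarith
    have hx0 : 1 / ((n : ℝ) + 1) ≤ x := by
      rw [hx']
      have := Real.one_sub_inv_le_log_of_pos (show (0 : ℝ) < 1 + 1 / n by positivity)
      refine le_trans (le_of_eq ?_) this
      field_simp
      ring
    have hLn : L ≤ n := by
      have := Real.log_le_sub_one_of_pos (show (0 : ℝ) < ((n + 1 : ℕ) : ℝ) by positivity)
      push_cast at this
      rw [hL]; push_cast; linarith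
    have hL0 : 0 ≤ L := Real.log_natCast_nonneg _
    have hlogn : Real.log n = L - x := by rw [hx]; ring
    rw [hlogn] at ih
    push_cast
    have hxpos : 0 ≤ x := le_trans (by positivity) hx0
    have i1 : x ^ 2 ≤ 2 * (1 / ((n : ℝ) + 1)) := by
      have : x ^ 2 ≤ (1 / n) ^ 2 := by gcongr
      refine this.trans ?_
      rw [div_pow, one_pow, mul_one_div, div_le_div_iff₀ (by positivity) (by positivity)]
      nlinarith
    have i2 : L * (x - 1 / ((n : ℝ) + 1)) ≤ 1 / ((n : ℝ) + 1) := by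
      have a1 : x - 1 / ((n : ℝ) + 1) ≤ 1 / (n * (n + 1)) := by
        have : (1 : ℝ) / (n * (n + 1)) = 1 / n - 1 / (n + 1) := by field_simp; ring
        rw [this]; linarith
      calc L * (x - 1 / ((n : ℝ) + 1)) ≤ n * (1 / (n * (n + 1))) := by
            apply mul_le_mul hLn a1 (by linarith) (by linarith)
        _ = 1 / ((n : ℝ) + 1) := by field_simp
    have i3 : 0 ≤ L * (x - 1 / ((n : ℝ) + 1)) := mul_nonneg hL0 (by linarith)
    have e : L / ((n : ℝ) + 1) = L * (1 / ((n : ℝ) + 1)) := by ring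
    rw [e]
    rw [abs_le] at ih ⊢
    constructor <;> nlinarith [ih.1, ih.2, sq_nonneg x]


/-- log-square asymptotics -/
def LS (f : ℕ → ℝ) (c : ℝ) : Prop :=
  ∃ K, 0 ≤ K ∧ ∀ N : ℕ, |f N - c * Real.log N ^ 2| ≤ K * (1 + Real.log N)

theorem LS_shift {f : ℕ → ℝ} {c : ℝ} (h : LS f c) :
    ∃ K, 0 ≤ K ∧ ∀ N d : ℕ, 1 ≤ d →
      |f (N / d) - c * Real.log N ^ 2| ≤ K * (1 + Real.log N) * (1 + Real.log d) := by
  obtain ⟨K, hK, hf⟩ := h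
  refine ⟨K + 2 * |c|, by positivity, fun N d hd => ?_⟩
  obtain ⟨h1, h2⟩ := log_div_floor N d hd
  have hl := Real.log_natCast_nonneg (N / d)
  have hd0 := Real.log_natCast_nonneg d
  have l2 : Real.log 2 ≤ 1 := by
    have := Real.log_le_sub_one_of_pos (show (0 : ℝ) < 2 by norm_num); linarith
  have hh := hf (N / d)
  set l := Real.log (N / d : ℕ)
  set L := Real.log N
  set D := Real.log d
  have e : f (N / d) - c * L ^ 2 = (f (N / d) - c * l ^ 2) + c * (l ^ 2 - L ^ 2) := by ring
  rw [e]
  refine (abs_add_le _ _).trans ?_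
  rw [abs_mul]
  have h3 : |l ^ 2 - L ^ 2| ≤ 2 * ((1 + L) * (1 + D)) := by
    rw [abs_le]; constructor <;> nlinarith [mul_nonneg hd0 (hl.trans h1)]
  have h4 : K * (1 + l) ≤ K * ((1 + L) * (1 + D)) := by
    apply mul_le_mul_of_nonneg_left _ hK
    nlinarith [mul_nonneg hd0 (hl.trans h1)]
  have h5 : |c| * |l ^ 2 - L ^ 2| ≤ |c| * (2 * ((1 + L) * (1 + D))) :=
    mul_le_mul_of_nonneg_left h3 (abs_nonneg c)
  calc _ ≤ K * ((1 + L) * (1 + D)) + |c| * (2 * ((1 + L) * (1 + D))) :=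
        add_le_add (hh.trans h4) h5
    _ = _ := by ring

theorem LS_shift_const {f : ℕ → ℝ} {c : ℝ} (h : LS f c) (d : ℕ) (hd : 1 ≤ d) :
    LS (fun N => f (N / d)) c := by
  obtain ⟨K, hK, hf⟩ := LS_shift h
  have hd0 := Real.log_natCast_nonneg d
  refine ⟨K * (1 + Real.log d), by positivity, fun N => (hf N d hd).trans (le_of_eq (by ring))⟩

theorem LS_add {f g : ℕ → ℝ} {c e : ℝ} (h : LS f c) (h' : LS g e) :
    LS (fun N => f N + g N) (c + e) := by
  obtain ⟨K, hK, hf⟩ := h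
  obtain ⟨K', hK', hf'⟩ := h'
  refine ⟨K + K', by positivity, fun N => ?_⟩
  have e : f N + g N - (c + e) * Real.log N ^ 2 =
    (f N - c * Real.log N ^ 2) + (g N - e * Real.log N ^ 2) := by ring
  rw [e]
  refine (abs_add_le _ _).trans ?_
  linarith [hf N, hf' N]

theorem LS_smul {f : ℕ → ℝ} {c : ℝ} (h : LS f c) (r : ℝ) :
    LS (fun N => r * f N) (r * c) := by
  obtain ⟨K, hK, hf⟩ := h
  refine ⟨|r| * K, by positivity, fun N => ?_⟩
  have e : r * f N - r * c * Real.log N ^ 2 = r * (f N - c * Real.log N ^ 2) := by ring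
  rw [e, abs_mul, mul_assoc]
  exact mul_le_mul_of_nonneg_left (hf N) (abs_nonneg r)

theorem LS_A : LS (Asum fun _ => 1) (1 / 2) := by
  refine ⟨5, by norm_num, fun N => ?_⟩
  have hA : Asum (fun _ => 1) N = ∑ u ∈ Finset.Icc 1 N, 1 / (u : ℝ) * Hs (N / u) := by
    unfold Asum
    rw [sum_hyp (fun u v => 1 * 1 / ((u : ℝ) * v))]
    apply Finset.sum_congr rfl
    intro u _
    unfold Hs
    rw [Finset.mul_sum]
    apply Finset.sum_congr rfl
    intro v _
    rw [one_mul, one_div_mul_one_div]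
  have hL := Real.log_natCast_nonneg N
  have l2 : Real.log 2 ≤ 1 := by
    have := Real.log_le_sub_one_of_pos (show (0 : ℝ) < 2 by norm_num); linarith
  have h1 : |Asum (fun _ => 1) N - ∑ u ∈ Finset.Icc 1 N, 1 / (u : ℝ) * (Real.log N - Real.log u)|
      ≤ Hs N := by
    rw [hA, ← Finset.sum_sub_distrib]
    refine (Finset.abs_sum_le_sum_abs _ _).trans ?_
    unfold Hs
    apply Finset.sum_le_sum
    intro u hu
    rw [Finset.mem_Icc] at hu
    rw [← mul_sub, abs_mul, abs_of_nonneg (by positivity : (0 : ℝ) ≤ 1 / (u : ℝ))]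
    apply mul_le_of_le_one_right (by positivity)
    have a1 := Hs_le (N / u)
    have a2 := Hs_ge (N / u)
    obtain ⟨a3, a4⟩ := log_div_floor N u hu.1
    have huR : (0 : ℝ) < u := by exact_mod_cast hu.1
    have a5 : Real.log (N / u : ℕ) ≤ Real.log N - Real.log u := by
      have hq : 0 < N / u := Nat.div_pos hu.2 hu.1
      have hNR : (0 : ℝ) < N := by exact_mod_cast (lt_of_lt_of_le hu.1 hu.2)
      rw [← Real.log_div hNR.ne' huR.ne']
      exact Real.log_le_log (by exact_mod_cast hq) Nat.cast_div_le
    rw [abs_le]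
    change -1 ≤ Hs (N / u) - _ ∧ Hs (N / u) - _ ≤ 1
    constructor <;> linarith
  have h2 : ∑ u ∈ Finset.Icc 1 N, 1 / (u : ℝ) * (Real.log N - Real.log u) =
      Hs N * Real.log N - ∑ u ∈ Finset.Icc 1 N, Real.log u / u := by
    unfold Hs
    rw [Finset.sum_mul, ← Finset.sum_sub_distrib]
    apply Finset.sum_congr rfl
    intro u _
    ring
  have h3 := sum_log_div N
  rw [h2] at h1
  have h4 := Hs_le N
  have h5 := Hs_ge N
  have h6 : Hs N * Real.log N ≤ (1 + Real.log N) * Real.log N := mul_le_mul_of_nonneg_right h4 hL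
  have h7 : Real.log N * Real.log N ≤ Hs N * Real.log N := mul_le_mul_of_nonneg_right h5 hL
  rw [abs_le] at h1 h3 ⊢
  constructor <;> nlinarith [h1.1, h1.2, h3.1, h3.2]

theorem hyp_scale (g : ℕ → ℕ → ℝ) (N d e : ℕ) (hd : 1 ≤ d) (he : 1 ≤ e) :
    ∑ p ∈ (hyp N).filter (fun p => d ∣ p.1 ∧ e ∣ p.2), g p.1 p.2 =
      ∑ p ∈ hyp (N / (d * e)), g (d * p.1) (e * p.2) := by
  symm
  apply Finset.sum_bij (fun p _ => (d * p.1, e * p.2))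
  · rintro ⟨u, v⟩ h
    rw [mem_hyp] at h
    obtain ⟨h1, h2, h3⟩ := h
    simp only [Finset.mem_filter, mem_hyp]
    refine ⟨⟨Nat.mul_pos hd h1, Nat.mul_pos he h2, ?_⟩, ⟨u, rfl⟩, ⟨v, rfl⟩⟩
    rw [Nat.le_div_iff_mul_le (Nat.mul_pos hd he)] at h3
    linarith
  · rintro ⟨u, v⟩ _ ⟨u', v'⟩ _ h
    simp only [Prod.mk.injEq] at h ⊢
    exact ⟨Nat.eq_of_mul_eq_mul_left hd h.1, Nat.eq_of_mul_eq_mul_left he h.2⟩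
  · rintro ⟨u, v⟩ h
    simp only [Finset.mem_filter, mem_hyp] at h
    obtain ⟨⟨h1, h2, h3⟩, ⟨x, rfl⟩, ⟨y, rfl⟩⟩ := h
    refine ⟨(x, y), ?_, rfl⟩
    rw [mem_hyp, Nat.le_div_iff_mul_le (Nat.mul_pos hd he)]
    exact ⟨Nat.pos_of_mul_pos_left h1, Nat.pos_of_mul_pos_left h2, by linarith⟩
  · rintro ⟨u, v⟩ _; rfl

theorem A_odd (N : ℕ) : Asum chiO N =
    Asum (fun _ => 1) N + (-1 * Asum (fun _ => 1) (N / 2) + 1 / 4 * Asum (fun _ => 1) (N / 4)) := by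
  set g : ℕ → ℕ → ℝ := fun u v => 1 / ((u : ℝ) * v) with hg
  have s1 := hyp_scale g N 2 1 (by norm_num) (by norm_num)
  have s2 := hyp_scale g N 1 2 (by norm_num) (by norm_num)
  have s3 := hyp_scale g N 2 2 (by norm_num) (by norm_num)
  have hA : ∀ M, Asum (fun _ => 1) M = ∑ p ∈ hyp M, g p.1 p.2 := by
    intro M; unfold Asum; simp [hg]
  have t1 : ∑ p ∈ hyp (N / (2 * 1)), g (2 * p.1) (1 * p.2) = 1 / 2 * Asum (fun _ => 1) (N / 2) := by
    rw [hA, Finset.mul_sum]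
    apply Finset.sum_congr rfl
    intro p _
    simp only [hg]; push_cast; rw [one_div_mul_one_div]; congr 1; ring
  have t2 : ∑ p ∈ hyp (N / (1 * 2)), g (1 * p.1) (2 * p.2) = 1 / 2 * Asum (fun _ => 1) (N / 2) := by
    rw [hA, Finset.mul_sum]
    apply Finset.sum_congr rfl
    intro p _
    simp only [hg]; push_cast; rw [one_div_mul_one_div]; congr 1; ring
  have t3 : ∑ p ∈ hyp (N / (2 * 2)), g (2 * p.1) (2 * p.2) = 1 / 4 * Asum (fun _ => 1) (N / 4) := by
    rw [hA, Finset.mul_sum]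
    apply Finset.sum_congr rfl
    intro p _
    simp only [hg]; push_cast; rw [one_div_mul_one_div]; congr 1; ring
  rw [t1, Finset.sum_filter] at s1
  rw [t2, Finset.sum_filter] at s2
  rw [t3, Finset.sum_filter] at s3
  have : Asum chiO N = ∑ p ∈ hyp N, (g p.1 p.2 - (if 2 ∣ p.1 ∧ 1 ∣ p.2 then g p.1 p.2 else 0)
      - (if 1 ∣ p.1 ∧ 2 ∣ p.2 then g p.1 p.2 else 0) + (if 2 ∣ p.1 ∧ 2 ∣ p.2 then g p.1 p.2 else 0)) := by
    unfold Asum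
    apply Finset.sum_congr rfl
    rintro ⟨u, v⟩ _
    simp only [hg, chiO, one_dvd, and_true, true_and, Nat.dvd_iff_mod_eq_zero]
    rcases Nat.mod_two_eq_zero_or_one u with h1 | h1 <;>
    rcases Nat.mod_two_eq_zero_or_one v with h2 | h2 <;> simp [h1, h2]
  rw [this, Finset.sum_add_distrib, Finset.sum_sub_distrib, Finset.sum_sub_distrib, s1, s2, s3, ← hA]
  ring

theorem LS_Aodd : LS (Asum chiO) (1 / 8) := by
  have h := LS_add LS_A (LS_add (LS_smul (LS_shift_const LS_A 2 (by norm_num)) (-1))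
    (LS_smul (LS_shift_const LS_A 4 (by norm_num)) (1 / 4)))
  have e : Asum chiO = fun N => Asum (fun _ => 1) N +
    (-1 * Asum (fun _ => 1) (N / 2) + 1 / 4 * Asum (fun _ => 1) (N / 4)) := funext A_odd
  rw [e]
  convert h using 1
  norm_num


/-- real-valued Moebius -/
noncomputable def mu (d : ℕ) : ℝ := ((ArithmeticFunction.moebius d : ℤ) : ℝ)

theorem mu_abs_le (d : ℕ) : |mu d| ≤ 1 := by
  unfold mu
  have := ArithmeticFunction.abs_moebius_le_one (n := d)
  exact_mod_cast this

theorem sum_mu (n : ℕ) (hn : n ≠ 0) : ∑ d ∈ n.divisors, mu d = if n = 1 then 1 else 0 := by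
  have h := congrArg (fun f => f n) ArithmeticFunction.moebius_mul_coe_zeta
  simp only [ArithmeticFunction.coe_mul_zeta_apply, ArithmeticFunction.one_apply] at h
  unfold mu
  have h2 : ((∑ d ∈ n.divisors, ArithmeticFunction.moebius d : ℤ) : ℝ) =
    ((if n = 1 then 1 else 0 : ℤ) : ℝ) := by rw [h]
  push_cast at h2
  exact h2

theorem Csum_eq (χ : ℕ → ℝ) (hχ : ∀ a b, χ (a * b) = χ a * χ b) (N : ℕ) :
    Csum χ N = ∑ d ∈ Finset.Icc 1 N, mu d * χ d ^ 2 / (d : ℝ) ^ 2 * Asum χ (N / (d * d)) := by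
  have h1 : Csum χ N = ∑ p ∈ hyp N, ∑ d ∈ Finset.Icc 1 N,
      if d ∣ p.1 ∧ d ∣ p.2 then mu d * (χ p.1 * χ p.2 / ((p.1 : ℝ) * p.2)) else 0 := by
    unfold Csum
    rw [Finset.sum_filter]
    apply Finset.sum_congr rfl
    rintro ⟨u, v⟩ h
    rw [mem_hyp] at h
    obtain ⟨hu, hv, huv⟩ := h
    rw [← Finset.sum_filter, ← Finset.sum_mul]
    have hg : Nat.gcd u v ≠ 0 := (Nat.gcd_pos_of_pos_left _ hu).ne'
    have hs : (Finset.Icc 1 N).filter (fun d => d ∣ u ∧ d ∣ v) = (Nat.gcd u v).divisors := by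
      ext d
      simp only [Finset.mem_filter, Finset.mem_Icc, Nat.mem_divisors, Nat.dvd_gcd_iff]
      constructor
      · rintro ⟨_, h⟩; exact ⟨h, hg⟩
      · rintro ⟨h, _⟩
        have : d ≤ u := Nat.le_of_dvd hu h.1
        have : 0 < d := Nat.pos_of_dvd_of_pos h.1 hu
        refine ⟨⟨this, by nlinarith⟩, h⟩
    simp only at hs ⊢
    rw [hs, sum_mu _ hg]
    by_cases hc : Nat.gcd u v = 1
    · simp [hc, Nat.Coprime]
    · simp [hc, Nat.Coprime]
  rw [h1, Finset.sum_comm]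
  apply Finset.sum_congr rfl
  intro d hd
  rw [Finset.mem_Icc] at hd
  rw [← Finset.sum_filter]
  rw [hyp_scale (fun u v => mu d * (χ u * χ v / ((u : ℝ) * v))) N d d hd.1 hd.1]
  unfold Asum
  rw [Finset.mul_sum]
  apply Finset.sum_congr rfl
  rintro ⟨u, v⟩ h
  rw [mem_hyp] at h
  have hd0 : (d : ℝ) ≠ 0 := by have := hd.1; positivity
  have hu0 : (u : ℝ) ≠ 0 := by have := h.1; positivity
  have hv0 : (v : ℝ) ≠ 0 := by have := h.2.1; positivity
  simp only [hχ]
  push_cast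
  field_simp

theorem summable_logsq : Summable fun d : ℕ => 1 / (d : ℝ) ^ 2 * (1 + Real.log ((d * d : ℕ) : ℝ)) := by
  have h1 : Summable fun d : ℕ => 5 * (1 / (d : ℝ) ^ (3 / 2 : ℝ)) :=
    (Real.summable_one_div_nat_rpow.2 (by norm_num)).mul_left 5
  apply Summable.of_nonneg_of_le _ _ h1
  · intro d
    have := Real.log_natCast_nonneg (d * d)
    positivity
  · intro d
    rcases Nat.eq_zero_or_pos d with rfl | hd
    · simp
    have hdR : (1 : ℝ) ≤ d := by exact_mod_cast hd
    have hl : Real.log d ≤ (d : ℝ) ^ (1 / 2 : ℝ) / (1 / 2) :=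
      Real.log_le_rpow_div (by linarith) (by norm_num)
    have h1 : (1 : ℝ) ≤ (d : ℝ) ^ (1 / 2 : ℝ) := Real.one_le_rpow hdR (by norm_num)
    have hll : Real.log ((d * d : ℕ) : ℝ) = 2 * Real.log d := by
      push_cast; rw [Real.log_mul (by positivity) (by positivity)]; ring
    rw [hll]
    have e : (d : ℝ) ^ 2 = (d : ℝ) ^ (3 / 2 : ℝ) * (d : ℝ) ^ (1 / 2 : ℝ) := by
      rw [← Real.rpow_add (by linarith), ← Real.rpow_natCast]; norm_num
    rw [e]
    have hp : (0 : ℝ) < (d : ℝ) ^ (3 / 2 : ℝ) := by positivity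
    rw [one_div_mul_eq_div, mul_one_div, div_le_div_iff₀ (by positivity) hp]
    have : 1 + 2 * Real.log d ≤ 5 * (d : ℝ) ^ (1 / 2 : ℝ) := by linarith
    nlinarith

theorem LS_C (χ : ℕ → ℝ) (hχ : ∀ a b, χ (a * b) = χ a * χ b) (hb : ∀ a, |χ a| ≤ 1) (c L : ℝ)
    (hA : LS (Asum χ) c) (hL : HasSum (fun d : ℕ => mu d * χ d ^ 2 / (d : ℝ) ^ 2) L) :
    LS (Csum χ) (c * L) := by
  obtain ⟨K, hK, hsh⟩ := LS_shift hA
  set S := ∑' d : ℕ, 1 / (d : ℝ) ^ 2 * (1 + Real.log ((d * d : ℕ) : ℝ)) with hS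
  have hS0 : 0 ≤ S := tsum_nonneg fun d => by
    have := Real.log_natCast_nonneg (d * d); positivity
  refine ⟨K * S, by positivity, fun N => ?_⟩
  have h1 : HasSum (fun d : ℕ => mu d * χ d ^ 2 / (d : ℝ) ^ 2 * Asum χ (N / (d * d))) (Csum χ N) := by
    rw [Csum_eq χ hχ]
    apply hasSum_sum_of_ne_finset_zero
    intro d hd
    rw [Finset.mem_Icc, not_and_or] at hd
    rcases Nat.eq_zero_or_pos d with rfl | hd0
    · simp
    · have : N / (d * d) = 0 := by
        rw [Nat.div_eq_zero_iff]; right; nlinarith [hd.resolve_left (by omega)]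
      rw [this]
      simp [Asum, hyp]
  have h2 := h1.sub (hL.mul_right (c * Real.log N ^ 2))
  have e : Csum χ N - c * L * Real.log N ^ 2 = Csum χ N - L * (c * Real.log N ^ 2) := by ring
  rw [e, ← h2.tsum_eq]
  have hlN := Real.log_natCast_nonneg N
  have hmaj : HasSum (fun d : ℕ => K * (1 + Real.log N) *
      (1 / (d : ℝ) ^ 2 * (1 + Real.log ((d * d : ℕ) : ℝ)))) (K * (1 + Real.log N) * S) :=
    summable_logsq.hasSum.mul_left _
  have := tsum_of_norm_bounded hmaj (f := fun d : ℕ => mu d * χ d ^ 2 / (d : ℝ) ^ 2 *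
    Asum χ (N / (d * d)) - mu d * χ d ^ 2 / (d : ℝ) ^ 2 * (c * Real.log N ^ 2)) ?_
  · rw [Real.norm_eq_abs] at this
    refine this.trans (le_of_eq (by ring))
  · intro d
    rw [← mul_sub, Real.norm_eq_abs, abs_mul]
    rcases Nat.eq_zero_or_pos d with rfl | hd0
    · simp
    have a1 : |mu d * χ d ^ 2 / (d : ℝ) ^ 2| ≤ 1 / (d : ℝ) ^ 2 := by
      rw [abs_div, abs_of_nonneg (by positivity : (0 : ℝ) ≤ (d : ℝ) ^ 2)]
      apply div_le_div_of_nonneg_right _ (by positivity)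
      rw [abs_mul, abs_pow]
      have := mu_abs_le d
      have := hb d
      have : |χ d| ^ 2 ≤ 1 := pow_le_one₀ (abs_nonneg _) this
      exact mul_le_one₀ (mu_abs_le d) (by positivity) this
    have a2 := hsh N (d * d) (Nat.mul_pos hd0 hd0)
    calc _ ≤ 1 / (d : ℝ) ^ 2 * (K * (1 + Real.log N) * (1 + Real.log ((d * d : ℕ) : ℝ))) :=
          mul_le_mul a1 a2 (abs_nonneg _) (by positivity)
      _ = _ := by ring

theorem hasSum_mu : HasSum (fun d : ℕ => mu d / (d : ℝ) ^ 2) (6 / Real.pi ^ 2) := by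
  have hs : (1 : ℝ) < (2 : ℂ).re := by norm_num
  have h1 := ArithmeticFunction.LSeriesSummable_moebius_iff.2 hs
  have h2 := LSeries_one_mul_Lseries_moebius hs
  rw [LSeries_one_eq_riemannZeta hs, riemannZeta_two] at h2
  have hpi : (Real.pi : ℂ) ≠ 0 := by exact_mod_cast Real.pi_ne_zero
  have h3 : LSeries (fun n => ((ArithmeticFunction.moebius n : ℤ) : ℂ)) 2 = 6 / (Real.pi : ℂ) ^ 2 := by
    field_simp at h2 ⊢
    linear_combination h2
  have h4 := h1.LSeriesHasSum
  rw [h3] at h4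
  unfold LSeriesHasSum at h4
  have h5 : HasSum (fun d : ℕ => ((mu d / (d : ℝ) ^ 2 : ℝ) : ℂ)) ((6 / Real.pi ^ 2 : ℝ) : ℂ) := by
    push_cast
    convert h4 using 1
    ext n
    rw [LSeries.term_def]
    split_ifs with h
    · simp [h]
    · simp [mu]
  exact_mod_cast h5

theorem mu_two_mul (k : ℕ) : mu (2 * k) = - (mu k * chiO k ^ 2) := by
  unfold mu chiO
  split_ifs with h
  · rw [ArithmeticFunction.isMultiplicative_moebius.map_mul_of_coprime
      (Nat.coprime_two_left.2 (Nat.odd_iff.2 h)),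
      ArithmeticFunction.moebius_apply_prime Nat.prime_two]
    push_cast; ring
  · rw [ArithmeticFunction.moebius_eq_zero_of_not_squarefree]
    · simp
    · intro hsq
      have := hsq 2 (by
        obtain ⟨j, rfl⟩ : ∃ j, k = 2 * j := ⟨k / 2, by omega⟩
        exact ⟨j, by ring⟩)
      simp at this

theorem hasSum_muO : HasSum (fun d : ℕ => mu d * chiO d ^ 2 / (d : ℝ) ^ 2) (8 / Real.pi ^ 2) := by
  have hsum : Summable (fun d : ℕ => mu d * chiO d ^ 2 / (d : ℝ) ^ 2) := by
    apply Summable.of_norm_bounded hasSum_mu.summable.norm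
    intro d
    unfold chiO
    split_ifs
    · simp
    · simp; positivity
  obtain ⟨L, hL⟩ := hsum
  have hodd : HasSum (fun k : ℕ => mu (2 * k + 1) / ((2 * k + 1 : ℕ) : ℝ) ^ 2) L := by
    have inj : Function.Injective (fun k : ℕ => 2 * k + 1) := fun a b h => by
      simp only at h; omega
    have := (Function.Injective.hasSum_iff inj (f := fun d : ℕ => mu d * chiO d ^ 2 / (d : ℝ) ^ 2)
      (a := L) ?_).2 hL
    · convert this using 1
      ext k
      simp [chiO, Nat.add_mod]
    · intro x hx
      have : x % 2 ≠ 1 := fun h => hx ⟨x / 2, by simp only; omega⟩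
      simp [chiO, this]
  have heven : HasSum (fun k : ℕ => mu (2 * k) / ((2 * k : ℕ) : ℝ) ^ 2) (-(1 / 4) * L) := by
    have := hL.mul_left (-(1 / 4))
    have e : (fun k : ℕ => mu (2 * k) / ((2 * k : ℕ) : ℝ) ^ 2) =
      fun i => -(1 / 4) * (mu i * chiO i ^ 2 / (i : ℝ) ^ 2) := ?_
    · rw [e]; exact this
    ext k
    rw [mu_two_mul]
    push_cast
    rw [mul_pow]
    ring
  have htot := HasSum.even_add_odd (f := fun d : ℕ => mu d / (d : ℝ) ^ 2) heven hodd
  have := htot.unique hasSum_mu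
  have e : L = 8 / Real.pi ^ 2 := by
    have e1 : L = 4 / 3 * (6 / Real.pi ^ 2) := by linarith
    rw [e1]; ring
  rwa [← e]

theorem LS_C1 : LS (Csum fun _ => 1) (3 / Real.pi ^ 2) := by
  have := LS_C (fun _ => 1) (by simp) (by simp) (1 / 2) (6 / Real.pi ^ 2) LS_A
    (by simpa using hasSum_mu)
  convert this using 1
  ring

theorem LS_CO : LS (Csum chiO) (1 / Real.pi ^ 2) := by
  have := LS_C chiO ?_ ?_ _ _ LS_Aodd hasSum_muO
  · convert this using 1
    ring
  · intro a b
    unfold chiO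
    rcases Nat.mod_two_eq_zero_or_one a with h1 | h1 <;>
    rcases Nat.mod_two_eq_zero_or_one b with h2 | h2 <;> simp [h1, h2, Nat.mul_mod]
  · intro a
    unfold chiO
    split_ifs <;> simp

theorem good_asymp : ∃ K, 0 ≤ K ∧ ∀ N : ℕ,
    |((goodSet N).card : ℝ) - 3 / Real.pi ^ 2 * (N * Real.log N ^ 2)| ≤ K * (N * (1 + Real.log N)) := by
  have h := LS_add LS_CO (LS_smul (LS_add (LS_shift_const LS_C1 4 (by norm_num))
    (LS_smul (LS_shift_const LS_CO 4 (by norm_num)) (-1))) (1 / 4))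
  obtain ⟨K, hK, hf⟩ := h
  refine ⟨8 + 2 * K, by positivity, fun N => ?_⟩
  have a1 := card_good_approx N
  have a2 := card_hyp_le N
  have a3 := hf N
  have hN : (0 : ℝ) ≤ N := Nat.cast_nonneg N
  set G := ((goodSet N).card : ℝ)
  set X := Csum chiO N + 1 / 4 * (Csum (fun _ => 1) (N / 4) + -1 * Csum chiO (N / 4)) with hX
  have eX : Csum chiO N + 1 / 4 * (Csum (fun _ => 1) (N / 4) - Csum chiO (N / 4)) = X := by
    rw [hX]; ring
  rw [eX] at a1
  set L := Real.log N
  have ec : (1 / Real.pi ^ 2 + 1 / 4 * (3 / Real.pi ^ 2 + -1 * (1 / Real.pi ^ 2))) =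
    3 / 2 / Real.pi ^ 2 := by ring
  rw [ec] at a3
  have e : G - 3 / Real.pi ^ 2 * (N * L ^ 2) = (G - 2 * (N * X)) +
    2 * N * (X - 3 / 2 / Real.pi ^ 2 * L ^ 2) := by ring
  rw [e]
  refine (abs_add_le _ _).trans ?_
  rw [abs_mul, abs_of_nonneg (by positivity : (0 : ℝ) ≤ 2 * N)]
  have : 2 * (N : ℝ) * |X - 3 / 2 / Real.pi ^ 2 * L ^ 2| ≤ 2 * N * (K * (1 + L)) :=
    mul_le_mul_of_nonneg_left a3 (by positivity)
  linarith


theorem arcosh_le_iff (a : ℕ) (ha : 2 ≤ a) (s : ℝ) (hs : 0 ≤ s) :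
    2 * arcosh (a : ℝ) ≤ s ↔ a ≤ ⌊Real.cosh (s / 2)⌋₊ := by
  have ha1 : (1 : ℝ) ≤ a := by exact_mod_cast (by omega : 1 ≤ a)
  have e : arcosh (a : ℝ) = Real.arcosh a := by
    unfold arcosh Real.arcosh; rfl
  rw [Nat.le_floor_iff (Real.cosh_pos _).le, e]
  have h0 : 0 ≤ Real.arcosh a := Real.arcosh_nonneg ha1
  have h1 : (a : ℝ) ≤ Real.cosh (s / 2) ↔ Real.arcosh a ≤ s / 2 := by
    conv_lhs => rw [← Real.cosh_arcosh ha1]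
    rw [Real.cosh_le_cosh, abs_of_nonneg h0, abs_of_nonneg (by linarith)]
  rw [h1]
  constructor <;> intro h <;> linarith

theorem natlog_le (N : ℕ) (hN : 1 ≤ N) : (Nat.log 2 N : ℝ) ≤ 2 * Real.log N := by
  have h1 : 2 ^ Nat.log 2 N ≤ N := Nat.pow_log_le_self 2 (by omega)
  have h2 : ((2 : ℝ) ^ Nat.log 2 N) ≤ N := by exact_mod_cast h1
  have h3 := Real.log_le_log (by positivity) h2
  rw [Real.log_pow] at h3
  have := Real.log_two_gt_d9
  have h4 : (0 : ℝ) ≤ (Nat.log 2 N : ℝ) := Nat.cast_nonneg _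
  nlinarith

theorem nonprim_bound (N : ℕ) (hN : 1 ≤ N) :
    ((2 * ((Nat.sqrt N + 1)^2 * (Nat.log 2 N + 1)) : ℕ) : ℝ) ≤ 16 * (N * (1 + Real.log N)) := by
  have h1 : (Nat.sqrt N + 1)^2 ≤ 4 * N := by
    have := Nat.sqrt_le N
    have : 1 ≤ Nat.sqrt N := by rw [Nat.le_sqrt]; omega
    nlinarith
  have h1' : ((Nat.sqrt N : ℝ) + 1)^2 ≤ 4 * N := by exact_mod_cast h1
  have h2 := natlog_le N hN
  have hL := Real.log_natCast_nonneg N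
  push_cast
  have : ((Nat.sqrt N : ℝ) + 1)^2 * ((Nat.log 2 N : ℝ) + 1) ≤ 4 * N * (2 * Real.log N + 1) :=
    mul_le_mul h1' (by linarith) (by positivity) (by positivity)
  nlinarith [mul_nonneg (Nat.cast_nonneg (α := ℝ) N) hL, Nat.cast_nonneg (α := ℝ) N]

theorem main_bound : ∃ C, ∀ s : ℝ, 4 ≤ s →
    |(NAmbBoth s : ℝ) - 3 / (8 * Real.pi ^ 2) * s ^ 2 * Real.exp (s / 2)| ≤
      C * (s * Real.exp (s / 2)) := by
  classical
  obtain ⟨K, hK, hg⟩ := good_asymp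
  refine ⟨K + 16 + 3 / Real.pi ^ 2 * 2, fun s hs => ?_⟩
  set N := ⌊Real.cosh (s / 2)⌋₊ with hNdef
  have hN := nAmb_eq s N (fun a ha => arcosh_le_iff a ha s (by linarith))
  have hsplit := Finset.card_filter_add_card_filter_not (s := goodSet N) (fun t => IsPrim (repOf t))
  have hnp := nonprim_card N
  set E := Real.exp (s / 2) with hE
  have hsE : s / 2 + 1 ≤ E := Real.add_one_le_exp _
  have hE3 : 5 ≤ E := by
    have : Real.exp 2 ≤ E := Real.exp_le_exp.2 (by linarith)
    have h1 : Real.exp 2 = Real.exp 1 * Real.exp 1 := by rw [← Real.exp_add]; norm_num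
    have := Real.exp_one_gt_d9
    nlinarith
  have hcosh : Real.cosh (s / 2) = (E + E⁻¹) / 2 := by
    rw [Real.cosh_eq, ← Real.exp_neg]
  have hEi : E⁻¹ ≤ 1 := inv_le_one_of_one_le₀ (by linarith)
  have hEi0 : 0 < E⁻¹ := by positivity
  have n1 : (N : ℝ) ≤ (E + 1) / 2 := by
    have := Nat.floor_le (Real.cosh_pos (s / 2)).le
    rw [← hNdef, hcosh] at this
    linarith
  have n2 : E / 2 - 1 ≤ N := by
    have := Nat.lt_floor_add_one (Real.cosh (s / 2))
    rw [← hNdef, hcosh] at this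
    linarith
  have hNpos : (1 : ℝ) ≤ N := by linarith
  have hN1 : 1 ≤ N := by exact_mod_cast hNpos
  have l1 : Real.log N ≤ s / 2 := by
    rw [Real.log_le_iff_le_exp (by linarith)]; linarith
  have l2 : s / 2 - 2 ≤ Real.log N := by
    rw [Real.le_log_iff_exp_le (by linarith), Real.exp_sub]
    have h1 : Real.exp 2 = Real.exp 1 * Real.exp 1 := by rw [← Real.exp_add]; norm_num
    have := Real.exp_one_gt_d9
    have h2 : 5 ≤ Real.exp 2 := by rw [h1]; nlinarith
    calc E / Real.exp 2 ≤ E / 5 := by gcongr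
      _ ≤ N := by linarith
  have hgN := hg N
  have hnpR := nonprim_bound N hN1
  have hnp' : ((((goodSet N).filter fun t => ¬ IsPrim (repOf t)).card : ℕ) : ℝ) ≤
      16 * (N * (1 + Real.log N)) := le_trans (by exact_mod_cast hnp) hnpR
  set q := ((((goodSet N).filter fun t => ¬ IsPrim (repOf t)).card : ℕ) : ℝ)
  have hq0 : 0 ≤ q := Nat.cast_nonneg _
  have hNA : (NAmbBoth s : ℝ) = ((goodSet N).card : ℝ) - q := by
    rw [hN, ← hsplit]; push_cast; ring
  set G := ((goodSet N).card : ℝ)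
  set L := Real.log N
  have hL0 : 0 ≤ L := by linarith
  have b1 : (N : ℝ) * (1 + L) ≤ s * E := by
    have : (N : ℝ) * (1 + L) ≤ E * s := mul_le_mul (by linarith) (by linarith) (by linarith) (by linarith)
    linarith
  have b2 : |(N : ℝ) * L ^ 2 - E / 2 * (s / 2) ^ 2| ≤ 2 * (s * E) := by
    have e : (N : ℝ) * L ^ 2 - E / 2 * (s / 2) ^ 2 =
      ((N : ℝ) - E / 2) * L ^ 2 + E / 2 * (L ^ 2 - (s / 2) ^ 2) := by ring
    rw [e]
    refine (abs_add_le _ _).trans ?_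
    rw [abs_mul, abs_mul, abs_of_nonneg (by linarith : 0 ≤ E / 2), abs_of_nonneg (sq_nonneg L)]
    have c1 : |(N : ℝ) - E / 2| ≤ 1 := by rw [abs_le]; constructor <;> linarith
    have c2 : L ^ 2 ≤ s * E / 2 := by
      have : L ^ 2 ≤ (s / 2) ^ 2 := by gcongr
      nlinarith
    have c3 : |L ^ 2 - (s / 2) ^ 2| ≤ 2 * s := by
      rw [abs_le]; constructor <;> nlinarith
    have c4 : E / 2 * |L ^ 2 - (s / 2) ^ 2| ≤ E / 2 * (2 * s) :=
      mul_le_mul_of_nonneg_left c3 (by linarith)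
    have c5 : |(N : ℝ) - E / 2| * L ^ 2 ≤ 1 * L ^ 2 := mul_le_mul_of_nonneg_right c1 (sq_nonneg L)
    nlinarith
  rw [hNA]
  set c := 3 / Real.pi ^ 2 with hc
  have hc0 : 0 ≤ c := by positivity
  have e : G - q - 3 / (8 * Real.pi ^ 2) * s ^ 2 * E =
      (G - c * (N * L ^ 2)) + (-q) + c * (N * L ^ 2 - E / 2 * (s / 2) ^ 2) := by
    have : 3 / (8 * Real.pi ^ 2) = c / 8 := by rw [hc]; field_simp
    rw [this]; ring
  rw [e]
  refine (abs_add_three _ _ _).trans ?_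
  rw [abs_neg, abs_of_nonneg hq0, abs_mul c, abs_of_nonneg hc0]
  have d1 : K * (N * (1 + L)) ≤ K * (s * E) := mul_le_mul_of_nonneg_left b1 hK
  have d2 : c * |(N : ℝ) * L ^ 2 - E / 2 * (s / 2) ^ 2| ≤ c * (2 * (s * E)) :=
    mul_le_mul_of_nonneg_left b2 hc0
  linarith

theorem final_asymp :
    (fun s : ℝ => (NAmbBoth s : ℝ) - 3 / (8 * Real.pi ^ 2) * s ^ 2 * Real.exp (s / 2))
      =O[Filter.atTop] fun s : ℝ => s * Real.exp (s / 2) := by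
  obtain ⟨C, hC⟩ := main_bound
  apply Asymptotics.IsBigO.of_bound C
  filter_upwards [Filter.eventually_ge_atTop (4 : ℝ)] with s hs
  rw [Real.norm_eq_abs, Real.norm_eq_abs,
    abs_of_nonneg (mul_nonneg (by linarith) (Real.exp_pos _).le)]
  exact hC s hs

/-- Footnote 7 / Lemma 16(i) with Equation (72): as `s → +∞`,
`𝒩_A^{1&2}(s) = (3/(8π²)) s² e^{s/2} + O(s e^{s/2})`. -/
theorem ambiguous_both_kinds_classes_asymptotic :
    (fun s : ℝ => (NAmbBoth s : ℝ) - 3 / (8 * Real.pi ^ 2) * s ^ 2 * Real.exp (s / 2))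
      =O[Filter.atTop] fun s : ℝ => s * Real.exp (s / 2) := by
  exact final_asymp
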